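/- arXiv:2002.06630 — 3 statements merged into one kernel-verified Lean document; each statement's English description precedes it below -/
import Mathlib

section
/- Let K_1, ..., K_{d+1} be d+1 finite families of convex sets in R^d such that for every choice of sets K_1 ∈ K_1, ..., K_{d+1} ∈ K_{d+1} the intersection K_1 ∩ ... ∩ K_{d+1} is nonempty. Then there exists an index 1 ≤ i ≤ d+1 such that the intersection of all the sets in the family K_i is nonempty. -/
/-!
Minimise a strictly convex function `φ` over every colorful intersection, and let the choice `f`
maximise this minimum, attained at `p`. By Helly's theorem for the `d + 1` sets chosen by `f` and
`{φ < φ p}`, one of the chosen sets, of color `i` say, can be dropped without lowering the minimum.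
Swapping the set of color `i` for another one of its family gives a minimiser `q` that still lies
in the remaining `d` sets, so `φ p ≤ φ q`, while `φ q ≤ φ p` by the choice of `f`. Strict convexity
forces `q = p`: the point `p` lies in every set of color `i`.

Minimisers exist when the sets are closed. To reduce to this case, pick a point in each colorful
intersection and replace each set with the convex hull of the picked points that it must contain.
-/

open Module Set

section OrderedField

variable {𝕜 E ι : Type*} [Field 𝕜] [LinearOrder 𝕜] [IsStrictOrderedRing 𝕜]
  [AddCommGroup E] [Module 𝕜 E] [FiniteDimensional 𝕜 E] [Fintype ι]

theorem iInter_nonempty_of_forall_iInter_ne {F : ι → Set E}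
    (hcard : finrank 𝕜 E + 1 < Fintype.card ι) (hconv : ∀ i, Convex 𝕜 (F i))
    (hF : ∀ j, (⋂ i ≠ j, F i).Nonempty) : (⋂ i, F i).Nonempty := by
  suffices (⋂ i ∈ Finset.univ, F i).Nonempty by simpa only [Finset.mem_univ, iInter_true] using this
  refine Convex.helly_theorem' (fun i _ ↦ hconv i) fun I _ hI ↦ ?_
  obtain ⟨j, hj⟩ : ∃ j, j ∉ I := by
    by_contra! hall
    rw [Finset.eq_univ_iff_forall.2 hall, Finset.card_univ] at hI
    lia
  exact (hF j).mono <| biInter_mono (fun i hi ↦ ne_of_mem_of_not_mem hi hj) fun _ _ ↦ subset_rfl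

theorem inter_iInter_nonempty_of_forall_iInter_ne {U : Set E} {F : ι → Set E}
    (hcard : finrank 𝕜 E < Fintype.card ι) (hU : Convex 𝕜 U) (hconv : ∀ i, Convex 𝕜 (F i))
    (hF : (⋂ i, F i).Nonempty) (hUF : ∀ j, (U ∩ ⋂ i ≠ j, F i).Nonempty) :
    (U ∩ ⋂ i, F i).Nonempty := by
  let G : Option ι → Set E := fun o ↦ o.elim U F
  suffices (⋂ o, G o).Nonempty by simpa only [iInter_option, G, Option.elim] using this
  refine iInter_nonempty_of_forall_iInter_ne (𝕜 := 𝕜) ?_ ?_ ?_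
  · simpa only [Fintype.card_option, add_lt_add_iff_right] using hcard
  · rintro (_ | i)
    exacts [hU, hconv i]
  · rintro (_ | j)
    · simpa [iInter_option, G] using hF
    · simpa [iInter_option, G] using hUF j

theorem exists_isMinOn_iInter_ne {β : Type*} [LinearOrder β] {φ : E → β} {F : ι → Set E} {p : E}
    (hcard : finrank 𝕜 E < Fintype.card ι) (hφ : QuasiconvexOn 𝕜 univ φ)
    (hconv : ∀ i, Convex 𝕜 (F i)) (hp : p ∈ ⋂ i, F i) (hmin : IsMinOn φ (⋂ i, F i) p) :
    ∃ j, IsMinOn φ (⋂ i ≠ j, F i) p := by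
  by_contra! hlower
  have hU : Convex 𝕜 {x | φ x < φ p} := by simpa using hφ.convex_lt (φ p)
  obtain ⟨x, hxp, hx⟩ :=
    inter_iInter_nonempty_of_forall_iInter_ne hcard hU hconv ⟨p, hp⟩ fun j ↦ by
      obtain ⟨x, hx, hxp⟩ : ∃ x ∈ ⋂ i ≠ j, F i, φ x < φ p := by
        simpa only [isMinOn_iff, not_forall, not_le, exists_prop] using hlower j
      exact ⟨x, hxp, hx⟩
  exact (hmin hx).not_gt hxp

theorem exists_iInter_nonempty_of_colorful_isMinOn {κ : ι → Type*} [∀ i, Finite (κ i)]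
    {β : Type*} [AddCommMonoid β] [LinearOrder β] [IsOrderedAddMonoid β] [Module 𝕜 β]
    [PosSMulMono 𝕜 β] {φ : E → β} {A : ∀ i, κ i → Set E} (hcard : finrank 𝕜 E < Fintype.card ι)
    (hφ : StrictConvexOn 𝕜 univ φ) (hconv : ∀ i k, Convex 𝕜 (A i k))
    (hmin : ∀ f : ∀ i, κ i, ∃ x ∈ ⋂ i, A i (f i), IsMinOn φ (⋂ i, A i (f i)) x) :
    ∃ i, (⋂ k, A i k).Nonempty := by
  classical
  obtain hκ | hκ := isEmpty_or_nonempty (∀ i, κ i)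
  · obtain ⟨i, hi⟩ := isEmpty_pi.1 hκ
    exact ⟨i, 0, mem_iInter.2 hi.elim⟩
  choose m hm hm_min using hmin
  obtain ⟨f, hf⟩ := Finite.exists_max fun f ↦ φ (m f)
  obtain ⟨i, hi⟩ := exists_isMinOn_iInter_ne hcard hφ.convexOn.quasiconvexOn
    (fun i ↦ hconv i (f i)) (hm f) (hm_min f)
  refine ⟨i, m f, mem_iInter.2 fun k ↦ ?_⟩
  let g := Function.update f i k
  have hmem : ∀ h : ∀ j, κ j, (∀ j ≠ i, h j = f j) → m h ∈ ⋂ j ≠ i, A j (f j) := fun h hh ↦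
    mem_iInter₂.2 fun j hj ↦ hh j hj ▸ mem_iInter.1 (hm h) j
  have hmf := hmem f fun _ _ ↦ rfl
  have hmg := hmem g fun j hj ↦ Function.update_of_ne hj k f
  have hg_min : IsMinOn φ (⋂ j ≠ i, A j (f j)) (m g) := fun x hx ↦ (hf g).trans (hi hx)
  have hB : Convex 𝕜 (⋂ j ≠ i, A j (f j)) := convex_iInter₂ fun j _ ↦ hconv j (f j)
  have hmgf : m g = m f := (hφ.subset (subset_univ _) hB).eq_of_isMinOn hg_min hi hmg hmf
  simpa only [g, Function.update_self, hmgf] using mem_iInter.1 (hm g) i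

end OrderedField

theorem exists_finite_subset_iInter_nonempty {α ι : Type*} {κ : ι → Type*} [Finite ι]
    [∀ i, Finite (κ i)] {K : ∀ i, κ i → Set α} (hK : ∀ f : ∀ i, κ i, (⋂ i, K i (f i)).Nonempty) :
    ∃ P : ∀ i, κ i → Set α, (∀ i k, (P i k).Finite) ∧ (∀ i k, P i k ⊆ K i k) ∧
      ∀ f : ∀ i, κ i, (⋂ i, P i (f i)).Nonempty := by
  choose x hx using hK
  refine ⟨fun i k ↦ x '' {f | f i = k}, fun i k ↦ (toFinite _).image x, ?_, fun f ↦ ?_⟩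
  · rintro i _ _ ⟨f, rfl, rfl⟩
    exact mem_iInter.1 (hx f) i
  · exact ⟨x f, mem_iInter.2 fun i ↦ mem_image_of_mem x rfl⟩

theorem strictConvexOn_norm_sq {E : Type*} [NormedAddCommGroup E] [InnerProductSpace ℝ E] :
    StrictConvexOn ℝ univ fun x : E ↦ ‖x‖ ^ 2 := by
  have hstrong : StrongConvexOn univ 2 fun x : E ↦ ‖x‖ ^ 2 :=
    strongConvexOn_iff_convex.2 <| by simpa using convexOn_const (0 : ℝ) (convex_univ (E := E))
  exact hstrong.strictConvexOn two_pos

theorem exists_isMinOn_norm_sq_of_isClosed {E : Type*} [SeminormedAddCommGroup E]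
    [ProperSpace E] {s : Set E} (hs : IsClosed s) (hne : s.Nonempty) :
    ∃ x ∈ s, IsMinOn (fun x ↦ ‖x‖ ^ 2) s x := by
  obtain ⟨x, hx, hdist⟩ := hs.exists_infDist_eq_dist hne 0
  refine ⟨x, hx, fun y hy ↦ ?_⟩
  have hxy : ‖x‖ ≤ ‖y‖ := by
    simpa only [hdist, dist_zero_left] using Metric.infDist_le_dist_of_mem (x := 0) hy
  exact pow_le_pow_left₀ (norm_nonneg x) hxy 2

section Real

variable {E ι : Type*} [Fintype ι] {κ : ι → Type*} [∀ i, Finite (κ i)]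

theorem exists_iInter_nonempty_of_colorful_isClosed [NormedAddCommGroup E] [InnerProductSpace ℝ E]
    [FiniteDimensional ℝ E] {A : ∀ i, κ i → Set E} (hcard : finrank ℝ E < Fintype.card ι)
    (hconv : ∀ i k, Convex ℝ (A i k)) (hclosed : ∀ i k, IsClosed (A i k))
    (hcolorful : ∀ f : ∀ i, κ i, (⋂ i, A i (f i)).Nonempty) : ∃ i, (⋂ k, A i k).Nonempty :=
  have := FiniteDimensional.proper_real E
  exists_iInter_nonempty_of_colorful_isMinOn hcard strictConvexOn_norm_sq hconv fun f ↦
    exists_isMinOn_norm_sq_of_isClosed (isClosed_iInter fun i ↦ hclosed i (f i)) (hcolorful f)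

variable [AddCommGroup E] [Module ℝ E] [FiniteDimensional ℝ E]

theorem exists_iInter_nonempty_of_colorful {K : ∀ i, κ i → Set E}
    (hcard : finrank ℝ E < Fintype.card ι) (hconv : ∀ i k, Convex ℝ (K i k))
    (hcolorful : ∀ f : ∀ i, κ i, (⋂ i, K i (f i)).Nonempty) : ∃ i, (⋂ k, K i k).Nonempty := by
  let e : E ≃ₗ[ℝ] EuclideanSpace ℝ (Fin (finrank ℝ E)) := .ofFinrankEq _ _ (by simp)
  obtain ⟨P, hPfin, hPK, hP⟩ := exists_finite_subset_iInter_nonempty hcolorful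
  obtain ⟨i, y, hy⟩ := exists_iInter_nonempty_of_colorful_isClosed
    (A := fun i k ↦ convexHull ℝ (e '' P i k)) (by simpa using hcard)
    (fun i k ↦ convex_convexHull ℝ _) (fun i k ↦ ((hPfin i k).image e).isClosed_convexHull ℝ)
    fun f ↦ by
      obtain ⟨x, hx⟩ := hP f
      exact ⟨e x, mem_iInter.2 fun i ↦
        subset_convexHull ℝ _ (mem_image_of_mem e (mem_iInter.1 hx i))⟩
  refine ⟨i, e.symm y, mem_iInter.2 fun k ↦ convexHull_min (hPK i k) (hconv i k) ?_⟩
  have hyk : y ∈ e '' convexHull ℝ (P i k) :=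
    (e.toLinearMap.image_convexHull (P i k)).ge (mem_iInter.1 hy k)
  obtain ⟨x, hx, rfl⟩ := hyk
  rwa [e.symm_apply_apply]

theorem colorful_helly_general {𝓚 : ι → Set (Set E)} (hcard : finrank ℝ E < Fintype.card ι)
    (hfin : ∀ i, (𝓚 i).Finite) (hconv : ∀ i, ∀ K ∈ 𝓚 i, Convex ℝ K)
    (hcolorful : ∀ f : ι → Set E, (∀ i, f i ∈ 𝓚 i) → (⋂ i, f i).Nonempty) :
    ∃ i, (⋂₀ 𝓚 i).Nonempty := by
  have (i : ι) : Finite (𝓚 i) := hfin i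
  simp only [sInter_eq_iInter]
  exact exists_iInter_nonempty_of_colorful hcard (fun i K ↦ hconv i K K.2)
    fun f ↦ hcolorful (fun i ↦ f i) fun i ↦ (f i).2

end Real

/-- **The Colorful Helly Theorem** (Bárány–Lovász).
Let `𝓚 1, …, 𝓚 (d+1)` be `d+1` finite families of convex sets in `ℝ^d` such that every
"colorful" choice `K 1 ∈ 𝓚 1, …, K (d+1) ∈ 𝓚 (d+1)` has nonempty intersection.  Then some
family `𝓚 i` has nonempty total intersection. -/
theorem colorful_helly (d : ℕ)
    (𝓚 : Fin (d + 1) → Set (Set (EuclideanSpace ℝ (Fin d))))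
    (hfin : ∀ i, (𝓚 i).Finite)
    (hconv : ∀ i, ∀ K ∈ 𝓚 i, Convex ℝ K)
    (hcolorful : ∀ f : (i : Fin (d + 1)) → Set (EuclideanSpace ℝ (Fin d)),
      (∀ i, f i ∈ 𝓚 i) → (⋂ i, f i).Nonempty) :
    ∃ i : Fin (d + 1), (⋂₀ 𝓚 i).Nonempty :=
  colorful_helly_general (by simp) hfin hconv hcolorful
end

section
/- Let V = V_1 ∪ ... ∪ V_{d+1} be a partition of a finite vertex set V, and let X be a d-Leray simplicial complex on V over a field F. View each V_i as a 0-dimensional complex and suppose that X contains the join V_1 * ... * V_{d+1} (i.e., every subset of V containing at most one vertex from each part V_i is a simplex of X). Then there exists an index 1 ≤ i ≤ d+1 such that V_i is a simplex of X. -/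
open Finset

/-- An abstract simplicial complex on the vertex type `V`: a set of finite subsets
("simplices") closed under taking subsets. -/
def IsComplex {V : Type*} (X : Set (Finset V)) : Prop :=
  ∀ σ ∈ X, ∀ τ, τ ⊆ σ → τ ∈ X

variable {V : Type*}

/-- The induced subcomplex `X[S] = {σ ∈ X : σ ⊆ S}`. -/
def induce (X : Set (Finset V)) (S : Finset V) : Set (Finset V) :=
  {σ | σ ∈ X ∧ σ ⊆ S}

/-- The link `lk(X,τ) = {σ : σ ∪ τ ∈ X, σ ∩ τ = ∅}`; it is the void complex if `τ ∉ X`. -/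
def link [DecidableEq V] (X : Set (Finset V)) (τ : Finset V) : Set (Finset V) :=
  {σ | σ ∪ τ ∈ X ∧ Disjoint σ τ}

/-- The star `str(X,τ) = {σ ∈ X : σ ∪ τ ∈ X}`. -/
def star [DecidableEq V] (X : Set (Finset V)) (τ : Finset V) : Set (Finset V) :=
  {σ | σ ∈ X ∧ σ ∪ τ ∈ X}

/-- The Alexander dual `X^∨ = {A ⊆ V : V \ A ∉ X}` of a complex on the finite vertex set
`V`. -/
def alexDual [Fintype V] [DecidableEq V] (X : Set (Finset V)) : Set (Finset V) :=
  {A | Aᶜ ∉ X}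

section Homology

variable (F : Type) [Field F]

/-- The faces of `X` of cardinality `n` (i.e. of dimension `n-1`). -/
def Face (X : Set (Finset V)) (n : ℕ) : Type _ :=
  {σ : Finset V // σ ∈ X ∧ σ.card = n}

/-- Simplicial chains in dimension `n-1`: formal `F`-linear combinations of faces of
cardinality `n`.  Since the empty face spans the degree `n = 0` part, this yields the
*augmented* simplicial chain complex of `X`. -/
def SChain (X : Set (Finset V)) (n : ℕ) : Type _ := Face X n →₀ F

noncomputable instance (X : Set (Finset V)) (n : ℕ) : AddCommGroup (SChain F X n) :=
  Finsupp.instAddCommGroup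

noncomputable instance (X : Set (Finset V)) (n : ℕ) : Module F (SChain F X n) :=
  Finsupp.module (Face X n) F

variable [LinearOrder V]

open Classical in
/-- The boundary of a face of cardinality `n+1`: the alternating sum of its codimension-one
subfaces, with signs determined by the linear order on the vertices. -/
noncomputable def bdryElem (X : Set (Finset V)) (n : ℕ) (σ : Face X (n+1)) :
    SChain F X n :=
  ∑ x ∈ σ.1.attach,
    if h : σ.1.erase ↑x ∈ X then
      ((-1 : F) ^ ((σ.1.filter (fun y => y < (x : V))).card)) •
        (Finsupp.single (⟨σ.1.erase ↑x, h, by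
          rw [Finset.card_erase_of_mem x.2, σ.2.2]; rfl⟩ : Face X n) 1 : SChain F X n)
    else 0

/-- The simplicial boundary map (in degree `0` it is the augmentation `C_0 → C_{-1} ≅ F`
encoded by `scyc`). -/
noncomputable def sbdry (X : Set (Finset V)) (n : ℕ) :
    SChain F X (n+1) →ₗ[F] SChain F X n :=
  Finsupp.lsum F fun σ => LinearMap.toSpanSingleton F (SChain F X n) (bdryElem F X n σ)

/-- The cycles of the augmented simplicial chain complex. -/
noncomputable def scyc (X : Set (Finset V)) : (n : ℕ) → Submodule F (SChain F X n)
  | 0 => ⊤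
  | (n+1) => LinearMap.ker (sbdry F X n)

/-- `RH F X n` is the reduced simplicial homology `h̃_{n-1}(X; F)` of `X` with coefficients
in `F` (faces of cardinality `n` have dimension `n-1`). -/
abbrev RH (X : Set (Finset V)) (n : ℕ) : Type _ :=
  scyc F X n ⧸ Submodule.comap (scyc F X n).subtype (LinearMap.range (sbdry F X n))

/-- `X` is `d`-Leray over `F`: every induced subcomplex has vanishing reduced homology in
all dimensions `i ≥ d`. -/
def IsLeray (d : ℕ) (X : Set (Finset V)) : Prop :=
  ∀ S : Finset V, ∀ i : ℕ, d ≤ i → Subsingleton (RH F (induce X S) (i+1))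

end Homology

/-!
Suppose that no colour class is a simplex of `X`. Consider the cubical complex of the Boolean
intervals `[B, A]`, relative to those with `B ∉ X` or with fewer than two vertices of some colour
in `A`. For fixed `A`, the cochains `[B, A] ↦ φ B A` form a simplicial chain complex of `X[A]`;
since `A` is large and `X` is `d`-Leray, peeling off the sets `A` by increasing cardinality shows
that every relative cocycle whose degree is the number of colours is a coboundary.

On the other hand, counting the vertices of each colour maps the cube onto a grid, and the product
of the `1`-cocycles dual to the edges from `1` to `2` of its factors pulls back to such a cocycle:
its bottom sets have one vertex of each colour, so they lie in `X` by the join hypothesis. Adding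
the vertices of each colour one at a time lifts the part of the grid where all counts are positive
back to the cube. This is a relative cycle, because on its boundary either some colour occurs only
once in `A` or `B` contains a whole colour class, and the cocycle takes the value `1` on it.
-/

namespace ColorfulHelly

section Sign

variable {R K : Type*} [CommRing R] [LinearOrder K] (κ : V → K)

variable (R) in
/-- The sign `(-1) ^ #{y ∈ S | κ y < κ v}` of `v` relative to `S`, where the vertices are ordered
by the key `κ`; it is the incidence sign both of simplices (`κ = id`) and of cubes. -/
def sgn (v : V) (S : Finset V) : R := ∏ y ∈ S, if κ y < κ v then -1 else 1

lemma sgn_eq_neg_one_pow_card (v : V) (S : Finset V) :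
    sgn R κ v S = (-1) ^ #{y ∈ S | κ y < κ v} := by
  simp only [sgn, prod_ite, prod_const, one_pow, mul_one]

lemma sgn_mul_self (v : V) (S : Finset V) : sgn R κ v S * sgn R κ v S = 1 := by
  rw [sgn_eq_neg_one_pow_card, ← mul_pow, neg_one_mul, neg_neg, one_pow]

variable {κ} in
lemma ite_lt_eq_neg_ite_gt (hκ : Function.Injective κ) {v w : V} (hvw : v ≠ w) :
    (if κ v < κ w then -1 else 1 : R) = -(if κ w < κ v then -1 else 1) := by
  rcases lt_or_gt_of_ne (hκ.ne hvw) with h | h <;> simp [h, h.not_gt]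

variable [DecidableEq V]

lemma sgn_erase_self (v : V) (S : Finset V) : sgn R κ v (S.erase v) = sgn R κ v S :=
  prod_erase S (by simp)

variable {κ}

lemma sgn_mul_sgn_erase (hκ : Function.Injective κ) {D : Finset V} {v w : V} (hv : v ∈ D)
    (hw : w ∈ D) (hvw : v ≠ w) :
    sgn R κ v D * sgn R κ w (D.erase v) = -(sgn R κ w D * sgn R κ v (D.erase w)) := by
  have split {x y : V} (hx : x ∈ D) :
      sgn R κ y D = (if κ x < κ y then -1 else 1) * sgn R κ y (D.erase x) :=
    (mul_prod_erase D _ hx).symm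
  rw [split (y := v) hw, split (y := w) hv, ite_lt_eq_neg_ite_gt hκ hvw]
  ring

end Sign

section CubicalComplex

variable {R K : Type*} [CommRing R] [LinearOrder K] [DecidableEq V] (κ : V → K)

variable (R) in
/-- The coboundary of the cubical complex whose cubes are the Boolean intervals `[B, A]`: a cochain
is a function `φ B A`, and the facets of `[B, A]` in direction `v ∈ A \ B` are `[B ∪ {v}, A]` and
`[B, A \ {v}]`. -/
def cubicalCoboundary : Module.End R (Finset V → Finset V → R) where
  toFun φ B A := ∑ v ∈ A \ B, sgn R κ v (A \ B) * (φ (insert v B) A - φ B (A.erase v))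
  map_add' φ ψ := by
    ext B A
    simp only [Pi.add_apply, ← sum_add_distrib]
    exact sum_congr rfl fun v _ ↦ by ring
  map_smul' a φ := by
    ext B A
    simp only [Pi.smul_apply, smul_eq_mul, RingHom.id_apply, mul_sum]
    exact sum_congr rfl fun v _ ↦ by ring

lemma cubicalCoboundary_apply (φ : Finset V → Finset V → R) (B A : Finset V) :
    cubicalCoboundary R κ φ B A =
      ∑ v ∈ A \ B, sgn R κ v (A \ B) * (φ (insert v B) A - φ B (A.erase v)) := rfl

lemma sum_sum_erase_eq_zero_of_antisymm {M : Type*} [AddCommGroup M] (D : Finset V)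
    (g : V → V → M) (hg : ∀ v ∈ D, ∀ w ∈ D, v ≠ w → g v w = -g w v) :
    ∑ v ∈ D, ∑ w ∈ D.erase v, g v w = 0 := by
  rw [sum_sigma']
  refine sum_involution (fun p _ ↦ ⟨p.2, p.1⟩) ?_ ?_ ?_ ?_
  · rintro ⟨v, w⟩ h
    obtain ⟨hv, hwv, hw⟩ : v ∈ D ∧ w ≠ v ∧ w ∈ D := by simpa using h
    exact add_eq_zero_iff_eq_neg.2 (hg v hv w hw hwv.symm)
  · rintro ⟨v, w⟩ h _ heq
    obtain ⟨-, hwv, -⟩ : v ∈ D ∧ w ≠ v ∧ w ∈ D := by simpa using h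
    exact hwv (congrArg Sigma.fst heq)
  · rintro ⟨v, w⟩ h
    obtain ⟨hv, hwv, hw⟩ : v ∈ D ∧ w ≠ v ∧ w ∈ D := by simpa using h
    simpa using ⟨hw, hwv.symm, hv⟩
  · exact fun _ _ ↦ rfl

variable {κ}

theorem cubicalCoboundary_cubicalCoboundary (hκ : Function.Injective κ)
    (φ : Finset V → Finset V → R) : cubicalCoboundary R κ (cubicalCoboundary R κ φ) = 0 := by
  ext B A
  have expand : cubicalCoboundary R κ (cubicalCoboundary R κ φ) B A =
      ∑ v ∈ A \ B, ∑ w ∈ (A \ B).erase v, sgn R κ v (A \ B) * sgn R κ w ((A \ B).erase v) *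
        (φ (insert w (insert v B)) A - φ (insert v B) (A.erase w)
          - φ (insert w B) (A.erase v) + φ B ((A.erase v).erase w)) := by
    rw [cubicalCoboundary_apply]
    refine sum_congr rfl fun v _ ↦ ?_
    rw [cubicalCoboundary_apply, cubicalCoboundary_apply, sdiff_insert, erase_sdiff_comm,
      ← sum_sub_distrib, mul_sum]
    exact sum_congr rfl fun w _ ↦ by ring
  rw [expand]
  refine sum_sum_erase_eq_zero_of_antisymm _ _ fun v hv w hw hvw ↦ ?_
  rw [sgn_mul_sgn_erase hκ hv hw hvw, insert_comm, erase_right_comm]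
  ring

variable (R) in
/-- The `p`-dimensional cubical cochains on subsets of the ground set `W` supported on the cubes
`[B, A]` with `B ∈ X` and `A ∈ 𝒢`. When `X` is a complex and `𝒢` an upper set these are the cochains
of the cube `2 ^ W` relative to the cubes with bottom outside `X` or top outside `𝒢`. -/
def relCochains (W : Finset V) (X 𝒢 : Set (Finset V)) (p : ℕ) :
    Submodule R (Finset V → Finset V → R) where
  carrier := {φ | ∀ B A, A ⊆ W → φ B A ≠ 0 → B ∈ X ∧ A ∈ 𝒢 ∧ B ⊆ A ∧ #A = #B + p}
  zero_mem' := fun _ _ _ h ↦ absurd rfl h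
  add_mem' {φ ψ} hφ hψ B A hA h := by
    by_cases h0 : φ B A = 0
    · exact hψ B A hA fun h1 ↦ h (by simp [h0, h1])
    · exact hφ B A hA h0
  smul_mem' a φ hφ B A hA h := hφ B A hA (right_ne_zero_of_mul h)

lemma cubicalCoboundary_mem_relCochains {W : Finset V} {X 𝒢 : Set (Finset V)} {p : ℕ}
    {φ : Finset V → Finset V → R} (hX : IsComplex X) (h𝒢 : IsUpperSet 𝒢)
    (hφ : φ ∈ relCochains R W X 𝒢 p) : cubicalCoboundary R κ φ ∈ relCochains R W X 𝒢 (p + 1) := by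
  intro B A hA h
  obtain ⟨v, hv, hne⟩ := exists_ne_zero_of_sum_ne_zero h
  obtain ⟨hvA, hvB⟩ := mem_sdiff.1 hv
  by_cases h0 : φ (insert v B) A = 0
  · have h1 : φ B (A.erase v) ≠ 0 := fun h1 ↦ hne (by simp [h0, h1])
    obtain ⟨hBX, hG, hBA, hcard⟩ := hφ _ _ ((erase_subset v A).trans hA) h1
    refine ⟨hBX, h𝒢 (erase_subset v A) hG, hBA.trans (erase_subset v A), ?_⟩
    rw [← card_erase_add_one hvA, hcard, add_assoc]
  · obtain ⟨hBX, hG, hBA, hcard⟩ := hφ _ _ hA h0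
    refine ⟨hX _ hBX B (subset_insert v B), hG, (subset_insert v B).trans hBA, ?_⟩
    rw [hcard, card_insert_of_notMem hvB]
    ring

end CubicalComplex

section SimplicialChains

variable (F : Type) [Field F]

/-- The coefficient function of a simplicial chain, extended by zero to all finite sets. -/
noncomputable def coeff (X : Set (Finset V)) (n : ℕ) : SChain F X n →ₗ[F] (Finset V → F) :=
  Finsupp.lcoeFun ∘ₗ Finsupp.lmapDomain F F fun σ : Face X n ↦ σ.1

variable {F} in
lemma coeff_single [DecidableEq V] {X : Set (Finset V)} {n : ℕ} (σ : Face X n) (a : F) :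
    coeff F X n (Finsupp.single σ a : Face X n →₀ F) = a • Pi.single σ.1 1 := by
  change ⇑(Finsupp.mapDomain (fun σ : Face X n ↦ σ.1) (Finsupp.single σ a)) = _
  rw [Finsupp.mapDomain_single, Finsupp.single_eq_pi_single, ← Pi.single_smul, smul_eq_mul, mul_one]

variable {F} in
lemma coeff_injective (X : Set (Finset V)) (n : ℕ) : Function.Injective (coeff F X n) :=
  DFunLike.coe_injective.comp (Finsupp.mapDomain_injective Subtype.val_injective)

variable {F} in
lemma mem_range_coeff_iff {X : Set (Finset V)} {n : ℕ} [Finite (Face X n)] {f : Finset V → F} :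
    f ∈ LinearMap.range (coeff F X n) ↔ ∀ B, f B ≠ 0 → B ∈ X ∧ #B = n := by
  constructor
  · rintro ⟨x, rfl⟩ B hB
    by_contra hBX
    exact hB (Finsupp.mapDomain_of_notMem_range (M := F) x B fun ⟨σ, hσ⟩ ↦ hBX (hσ ▸ σ.2))
  · intro hf
    refine ⟨(Finsupp.equivFunOnFinite.symm fun σ ↦ f σ.1 : Face X n →₀ F), funext fun B ↦ ?_⟩
    by_cases hB : B ∈ X ∧ #B = n
    · exact Finsupp.mapDomain_apply (M := F) Subtype.val_injective _ (⟨B, hB⟩ : Face X n)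
    · rw [not_imp_comm.1 (hf B) hB]
      exact Finsupp.mapDomain_of_notMem_range (M := F) _ B fun ⟨σ, hσ⟩ ↦ hB (hσ ▸ σ.2)

variable [LinearOrder V]

/-- The simplicial boundary, in the ground set `A`, of a chain encoded as its coefficient function
on all finite sets. -/
def boundary (A : Finset V) : Module.End F (Finset V → F) where
  toFun f B := ∑ v ∈ A \ B, sgn F id v B * f (insert v B)
  map_add' f g := by
    ext B
    simp only [Pi.add_apply, mul_add, sum_add_distrib]
  map_smul' a f := by
    ext B
    simp only [Pi.smul_apply, smul_eq_mul, RingHom.id_apply, mul_sum, mul_left_comm]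

lemma boundary_apply (A : Finset V) (f : Finset V → F) (B : Finset V) :
    boundary F A f B = ∑ v ∈ A \ B, sgn F id v B * f (insert v B) := rfl

lemma boundary_single {A σ : Finset V} (hσ : σ ⊆ A) :
    boundary F A (Pi.single σ 1) = ∑ v ∈ σ, sgn F id v σ • Pi.single (σ.erase v) 1 := by
  ext B
  simp only [boundary_apply, Finset.sum_apply, Pi.smul_apply, smul_eq_mul, Pi.single_apply,
    mul_ite, mul_one, mul_zero, ← sum_filter]
  have hinsert (v : V) : v ∈ A \ B ∧ insert v B = σ ↔ v ∈ σ ∧ B = σ.erase v := by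
    constructor
    · rintro ⟨hv, rfl⟩
      exact ⟨mem_insert_self v B, (erase_insert (mem_sdiff.1 hv).2).symm⟩
    · rintro ⟨hv, rfl⟩
      exact ⟨mem_sdiff.2 ⟨hσ hv, notMem_erase v σ⟩, insert_erase hv⟩
  refine sum_congr (ext fun v ↦ by simpa only [mem_filter] using hinsert v) fun v hv ↦ ?_
  rw [(mem_filter.1 hv).2, sgn_erase_self]

variable {F}

lemma coeff_bdryElem {X : Set (Finset V)} {A : Finset V} (hX : IsComplex X) (hA : ∀ σ ∈ X, σ ⊆ A)
    {n : ℕ} (σ : Face X (n + 1)) :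
    coeff F X n (bdryElem F X n σ) = boundary F A (Pi.single σ.1 1) := by
  rw [boundary_single F (hA _ σ.2.1), ← sum_attach, bdryElem, map_sum]
  refine sum_congr rfl fun v _ ↦ ?_
  have hface : σ.1.erase v.1 ∈ X := hX _ σ.2.1 _ (erase_subset _ _)
  refine (congrArg (coeff F X n) (dif_pos hface)).trans ?_
  rw [sgn_eq_neg_one_pow_card]
  exact ((coeff F X n).map_smul _ _).trans
    (congrArg _ ((coeff_single _ 1).trans (one_smul F _)))

lemma coeff_sbdry {X : Set (Finset V)} {A : Finset V} (hX : IsComplex X) (hA : ∀ σ ∈ X, σ ⊆ A)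
    {n : ℕ} (x : SChain F X (n + 1)) :
    coeff F X n (sbdry F X n x) = boundary F A (coeff F X (n + 1) x) := by
  suffices h : coeff F X n ∘ₗ sbdry F X n = boundary F A ∘ₗ coeff F X (n + 1) from
    LinearMap.congr_fun h x
  refine Finsupp.lhom_ext (M := F) fun σ a ↦ ?_
  have hsbdry : sbdry F X n (Finsupp.single σ a : Face X (n + 1) →₀ F) = a • bdryElem F X n σ :=
    Finsupp.lsum_single (R := F) (S := F) _ _ _
  calc coeff F X n (sbdry F X n (Finsupp.single σ a : Face X (n + 1) →₀ F))
      = a • boundary F A (Pi.single σ.1 1) := by rw [hsbdry, map_smul, coeff_bdryElem hX hA]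
    _ = boundary F A (coeff F X (n + 1) (Finsupp.single σ a : Face X (n + 1) →₀ F)) := by
        rw [coeff_single, map_smul]

lemma exists_boundary_eq_of_isLeray {d : ℕ} {X : Set (Finset V)} (hX : IsComplex X)
    (hL : IsLeray F d X) {A : Finset V} {i : ℕ} (hi : d ≤ i) {f : Finset V → F}
    (hf : ∀ B, f B ≠ 0 → B ∈ induce X A ∧ #B = i + 1) (hcycle : boundary F A f = 0) :
    ∃ g : Finset V → F, (∀ B, g B ≠ 0 → B ∈ induce X A ∧ #B = i + 2) ∧ boundary F A g = f := by
  have hY : IsComplex (induce X A) := fun σ hσ τ hτ ↦ ⟨hX σ hσ.1 τ hτ, hτ.trans hσ.2⟩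
  have hYA (σ) (hσ : σ ∈ induce X A) : σ ⊆ A := hσ.2
  have hfin (n : ℕ) : Finite (Face (induce X A) n) :=
    (A.powerset.finite_toSet.subset fun σ hσ ↦ mem_coe.2 (mem_powerset.2 hσ.1.2)).to_subtype
  obtain ⟨x, rfl⟩ := mem_range_coeff_iff.2 hf
  have hx : x ∈ scyc F (induce X A) (i + 1) := by
    refine LinearMap.mem_ker.2 (coeff_injective _ _ ?_)
    rw [coeff_sbdry hY hYA, hcycle, map_zero]
  obtain ⟨y, hy⟩ : x ∈ LinearMap.range (sbdry F (induce X A) (i + 1)) := by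
    have : Subsingleton (RH F (induce X A) (i + 1)) := hL A i hi
    have hzero : (Submodule.Quotient.mk ⟨x, hx⟩ : RH F (induce X A) (i + 1)) = 0 :=
      Subsingleton.elim _ _
    exact Submodule.mem_comap.1 ((Submodule.Quotient.mk_eq_zero _).1 hzero)
  refine ⟨coeff F _ _ y, mem_range_coeff_iff.1 ⟨y, rfl⟩, ?_⟩
  rw [← coeff_sbdry hY hYA, hy]

end SimplicialChains

section Reorientation

variable (R : Type*) {K : Type*} [CommRing R] [LinearOrder K] [LinearOrder V] (κ : V → K)

/-- The sign by which the face `B` of a column `A` has to be reoriented to turn the simplicial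
incidence signs `sgn R id v B` into the cubical ones `sgn R κ v (A \ B)`. -/
def reorient (A B : Finset V) : R :=
  ∏ x ∈ B, (sgn R κ x (A \ B) * ∏ y ∈ B, if y < x ∧ κ y < κ x then -1 else 1)

lemma reorient_mul_self (A B : Finset V) : reorient R κ A B * reorient R κ A B = 1 := by
  rw [reorient, ← prod_mul_distrib]
  refine prod_eq_one fun x _ ↦ ?_
  rw [mul_mul_mul_comm, sgn_mul_self, ← prod_mul_distrib, one_mul]
  exact prod_eq_one fun y _ ↦ by split_ifs <;> simp

variable {κ}

lemma reorient_insert (hκ : Function.Injective κ) {A B : Finset V} {v : V} (hv : v ∈ A \ B) :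
    reorient R κ A (insert v B) = reorient R κ A B * sgn R id v B * sgn R κ v (A \ B) := by
  have hvB : v ∉ B := (mem_sdiff.1 hv).2
  have pair (x : V) (hx : x ∈ B) :
      (if v < x ∧ κ v < κ x then -1 else 1 : R) * (if x < v ∧ κ x < κ v then -1 else 1) =
        (if κ v < κ x then -1 else 1) * (if x < v then -1 else 1) := by
    have hne : x ≠ v := ne_of_mem_of_not_mem hx hvB
    rcases hne.lt_or_gt with h | h <;> rcases (hκ.ne hne).lt_or_gt with h' | h' <;>
      simp [h, h', h.not_gt, h'.not_gt]
  have split : ∏ x ∈ B, sgn R κ x (A \ B) =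
      (∏ x ∈ B, if κ v < κ x then -1 else 1) * ∏ x ∈ B, sgn R κ x ((A \ B).erase v) := by
    rw [← prod_mul_distrib]
    exact prod_congr rfl fun x _ ↦ (mul_prod_erase _ _ hv).symm
  have hpair := prod_congr rfl pair
  simp only [prod_mul_distrib] at hpair
  simp only [reorient, prod_insert hvB, sdiff_insert, sgn_erase_self, lt_self_iff_false, false_and,
    if_false, one_mul, prod_mul_distrib, split, sgn.eq_def R id, id_def]
  linear_combination (sgn R κ v (A \ B) * (∏ x ∈ B, sgn R κ x ((A \ B).erase v)) *
    ∏ x ∈ B, ∏ y ∈ B, if y < x ∧ κ y < κ x then -1 else 1) * hpair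

end Reorientation

section Vanishing

variable {F : Type} [Field F] {K : Type*} [LinearOrder K] [LinearOrder V] {κ : V → K}

lemma boundary_reorient_mul (hκ : Function.Injective κ) (A : Finset V) (f : Finset V → F)
    (B : Finset V) :
    boundary F A (reorient F κ A * f) B =
      reorient F κ A B * ∑ v ∈ A \ B, sgn F κ v (A \ B) * f (insert v B) := by
  rw [boundary_apply, mul_sum]
  refine sum_congr rfl fun v hv ↦ ?_
  rw [Pi.mul_apply, reorient_insert F hκ hv]
  linear_combination (reorient F κ A B * sgn F κ v (A \ B) * f (insert v B)) *
    sgn_mul_self (R := F) id v B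

lemma exists_sum_sgn_mul_eq_of_isLeray {d : ℕ} {X : Set (Finset V)} (hX : IsComplex X)
    (hL : IsLeray F d X) (hκ : Function.Injective κ) {A : Finset V} {i : ℕ} (hi : d ≤ i)
    {f : Finset V → F} (hf : ∀ B, f B ≠ 0 → B ∈ induce X A ∧ #B = i + 1)
    (hcycle : ∀ B, ∑ v ∈ A \ B, sgn F κ v (A \ B) * f (insert v B) = 0) :
    ∃ g : Finset V → F, (∀ B, g B ≠ 0 → B ∈ induce X A ∧ #B = i + 2) ∧
      ∀ B, ∑ v ∈ A \ B, sgn F κ v (A \ B) * g (insert v B) = f B := by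
  have hsq : reorient F κ A * reorient F κ A = 1 := funext fun B ↦ reorient_mul_self F κ A B
  obtain ⟨g, hg, hbdry⟩ := exists_boundary_eq_of_isLeray (f := reorient F κ A * f) hX hL hi
    (fun B hB ↦ hf B (right_ne_zero_of_mul hB))
    (funext fun B ↦ by rw [boundary_reorient_mul hκ, hcycle, mul_zero, Pi.zero_apply])
  refine ⟨reorient F κ A * g, fun B hB ↦ hg B (right_ne_zero_of_mul hB), fun B ↦ ?_⟩
  have hB : reorient F κ A B * _ = reorient F κ A B * f B :=
    (boundary_reorient_mul hκ A (reorient F κ A * g) B).symm.trans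
      (by rw [← mul_assoc, hsq, one_mul, hbdry, Pi.mul_apply])
  exact mul_left_cancel₀ (left_ne_zero_of_mul_eq_one (reorient_mul_self F κ A B)) hB

lemma exists_cubicalCoboundary_eq_of_eq_zero_below {d p n : ℕ} {X 𝒢 : Set (Finset V)}
    {W : Finset V} (hX : IsComplex X) (hL : IsLeray F d X) (hκ : Function.Injective κ)
    (hcard : ∀ A ∈ 𝒢, d + p + 2 ≤ #A) {q : Finset V → Finset V → F}
    (hq : q ∈ relCochains F W X 𝒢 (p + 1)) (hcocycle : cubicalCoboundary F κ q = 0)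
    (hzero : ∀ A ⊆ W, #A < n → ∀ B, q B A = 0) :
    ∃ g ∈ relCochains F W X 𝒢 p, ∀ A ⊆ W, #A ≤ n → ∀ B, cubicalCoboundary F κ g B A = q B A := by
  have column (A : Finset V) : ∃ g : Finset V → F,
      (∀ B, g B ≠ 0 → #A = n ∧ B ∈ X ∧ A ∈ 𝒢 ∧ B ⊆ A ∧ #A = #B + p) ∧
      (A ⊆ W → #A = n → ∀ B, ∑ v ∈ A \ B, sgn F κ v (A \ B) * g (insert v B) = q B A) := by
    by_cases hA : A ⊆ W ∧ A ∈ 𝒢 ∧ #A = n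
    · obtain ⟨hAW, hA𝒢, rfl⟩ := hA
      have hle := hcard A hA𝒢
      -- On a column of minimal cardinality only the facets `[B ∪ {v}, A]` contribute to `δq`.
      have hcycle (B) : ∑ v ∈ A \ B, sgn F κ v (A \ B) * q (insert v B) A = 0 := by
        refine Eq.trans ?_ (congrFun₂ hcocycle B A)
        rw [cubicalCoboundary_apply]
        refine sum_congr rfl fun v hv ↦ ?_
        rw [hzero (A.erase v) ((erase_subset v A).trans hAW)
          (card_erase_lt_of_mem (mem_sdiff.1 hv).1), sub_zero]
      obtain ⟨g, hg, hgq⟩ := exists_sum_sgn_mul_eq_of_isLeray (i := #A - p - 2)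
        (f := fun B ↦ q B A) hX hL hκ (by omega) (fun B hB ↦ by
          obtain ⟨hBX, -, hBA, hAB⟩ := hq B A hAW hB
          exact ⟨⟨hBX, hBA⟩, by omega⟩) hcycle
      refine ⟨g, fun B hB ↦ ?_, fun _ _ ↦ hgq⟩
      obtain ⟨⟨hBX, hBA⟩, hBcard⟩ := hg B hB
      exact ⟨rfl, hBX, hA𝒢, hBA, by omega⟩
    · refine ⟨0, fun B hB ↦ absurd rfl hB, fun hAW hAn B ↦ ?_⟩
      simp only [Pi.zero_apply, mul_zero, sum_const_zero]
      by_contra hne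
      exact hA ⟨hAW, (hq B A hAW (Ne.symm hne)).2.1, hAn⟩
  choose g hg hgq using column
  refine ⟨fun B A ↦ g A B, fun B A _ hB ↦ (hg A B hB).2, fun A hAW hAn B ↦ ?_⟩
  have hg0 {A B} (hA : #A < n) : g A B = 0 := not_imp_comm.1 (fun h ↦ (hg A B h).1) hA.ne
  trans ∑ v ∈ A \ B, sgn F κ v (A \ B) * g A (insert v B)
  · rw [cubicalCoboundary_apply]
    refine sum_congr rfl fun v hv ↦ ?_
    rw [hg0 ((card_erase_lt_of_mem (mem_sdiff.1 hv).1).trans_le hAn), sub_zero]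
  · rcases hAn.lt_or_eq with hlt | heq
    · simp only [hg0 hlt, mul_zero, sum_const_zero, hzero A hAW hlt B]
    · exact hgq A hAW heq B

theorem exists_cubicalCoboundary_eq {d p : ℕ} {X 𝒢 : Set (Finset V)} {W : Finset V}
    (hX : IsComplex X) (hL : IsLeray F d X) (hκ : Function.Injective κ) (h𝒢 : IsUpperSet 𝒢)
    (hcard : ∀ A ∈ 𝒢, d + p + 2 ≤ #A) {q : Finset V → Finset V → F}
    (hq : q ∈ relCochains F W X 𝒢 (p + 1)) (hcocycle : cubicalCoboundary F κ q = 0) :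
    ∃ w ∈ relCochains F W X 𝒢 p, ∀ A ⊆ W, ∀ B, cubicalCoboundary F κ w B A = q B A := by
  suffices h : ∀ n, ∃ w ∈ relCochains F W X 𝒢 p,
      ∀ A ⊆ W, #A < n → ∀ B, cubicalCoboundary F κ w B A = q B A by
    obtain ⟨w, hw, hwq⟩ := h (#W + 1)
    exact ⟨w, hw, fun A hA ↦ hwq A hA (Nat.lt_succ_of_le (card_le_card hA))⟩
  intro n
  induction n with
  | zero => exact ⟨0, zero_mem _, fun A _ hA ↦ absurd hA (Nat.not_lt_zero _)⟩
  | succ n ih =>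
    obtain ⟨w, hw, hlow⟩ := ih
    obtain ⟨g, hg, hgq⟩ := exists_cubicalCoboundary_eq_of_eq_zero_below (n := n)
      (q := q - cubicalCoboundary F κ w) hX hL hκ hcard
      (sub_mem hq (cubicalCoboundary_mem_relCochains hX h𝒢 hw))
      (by rw [map_sub, hcocycle, cubicalCoboundary_cubicalCoboundary hκ, sub_zero])
      (fun A hA hAn B ↦ sub_eq_zero.2 (hlow A hA hAn B).symm)
    refine ⟨w + g, add_mem hw hg, fun A hA hAn B ↦ ?_⟩
    rw [map_add, Pi.add_apply, Pi.add_apply, hgq A hA (Nat.le_of_lt_succ hAn) B]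
    exact add_sub_cancel _ _

end Vanishing

section Colours

variable {ι : Type*} {c : V → ι}

lemma exists_coloring [Nonempty ι] {P : ι → Finset V}
    (hP : ∀ i j, i ≠ j → Disjoint (P i) (P j)) : ∃ c : V → ι, ∀ i, ∀ v ∈ P i, c v = i :=
  ⟨fun v ↦ Classical.epsilon fun i ↦ v ∈ P i, fun i v hv ↦ of_not_not fun hne ↦
    disjoint_left.1 (hP _ _ hne) (Classical.epsilon_spec (p := fun i ↦ v ∈ P i) ⟨i, hv⟩) hv⟩

variable [DecidableEq ι]

variable (c) in
/-- The vertices of `A` of colour `i`. -/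
def part (A : Finset V) (i : ι) : Finset V := {v ∈ A | c v = i}

lemma mem_part {A : Finset V} {i : ι} {v : V} : v ∈ part c A i ↔ v ∈ A ∧ c v = i := mem_filter

lemma part_mono {A B : Finset V} (h : A ⊆ B) (i : ι) : part c A i ⊆ part c B i :=
  filter_subset_filter _ h

lemma card_eq_sum_card_part [Fintype ι] (A : Finset V) : #A = ∑ i, #(part c A i) :=
  card_eq_sum_card_fiberwise fun _ _ ↦ mem_coe.2 (mem_univ _)

variable (c) in
/-- The sets containing at least two vertices of each colour. -/
def crowdedSets : Set (Finset V) := {A | ∀ i, 2 ≤ #(part c A i)}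

lemma isUpperSet_crowdedSets : IsUpperSet (crowdedSets c) :=
  fun _ _ hAB hA i ↦ (hA i).trans (card_le_card (part_mono hAB i))

lemma two_mul_card_le_card [Fintype ι] {A : Finset V} (hA : A ∈ crowdedSets c) :
    2 * Fintype.card ι ≤ #A := by
  rw [card_eq_sum_card_part (c := c), mul_comm, ← smul_eq_mul, ← card_univ]
  exact card_nsmul_le_sum _ _ _ fun i _ ↦ hA i

variable [DecidableEq V]

lemma card_part_sdiff {A B : Finset V} (h : B ⊆ A) (i : ι) :
    #(part c (A \ B) i) = #(part c A i) - #(part c B i) := by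
  have hpart : part c (A \ B) i = part c A i \ part c B i := by
    ext v
    simp only [mem_part, mem_sdiff]
    tauto
  rw [hpart, card_sdiff_of_subset (part_mono h i)]

lemma card_part_insert {B : Finset V} {v : V} (hv : v ∉ B) (i : ι) :
    #(part c (insert v B) i) = #(part c B i) + if c v = i then 1 else 0 := by
  rw [part, filter_insert]
  split_ifs
  · exact card_insert_of_notMem fun h ↦ hv (mem_filter.1 h).1
  · rfl

lemma card_part_erase_add {A : Finset V} {v : V} (hv : v ∈ A) (i : ι) :
    #(part c (A.erase v) i) + (if c v = i then 1 else 0) = #(part c A i) := by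
  rw [← card_part_insert (notMem_erase v A), insert_erase hv]

end Colours

section RainbowCocycle

variable {R ι : Type*} [CommRing R] {c : V → ι}

variable (c) in
/-- The key ordering the vertices by colour first. -/
def colorKey (v : V) : ι ×ₗ V := toLex (c v, v)

lemma colorKey_injective : Function.Injective (colorKey c) :=
  fun _ _ h ↦ congrArg Prod.snd (toLex.injective h)

variable [LinearOrder ι] [LinearOrder V]

lemma colorKey_lt_colorKey_iff {v w : V} (h : c v ≠ c w) :
    colorKey c v < colorKey c w ↔ c v < c w := by
  simp [colorKey, Prod.Lex.toLex_lt_toLex, h]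

lemma sum_sgn_part_eq_zero {D : Finset V} {i : ι} (hD : #(part c D i) = 2) :
    ∑ v ∈ part c D i, sgn R (colorKey c) v D = 0 := by
  obtain ⟨a, b, hab, hpart⟩ := card_eq_two.1 hD
  have hmem {v} : v ∈ D ∧ c v = i ↔ v = a ∨ v = b := by
    rw [← mem_part, hpart, mem_insert, mem_singleton]
  obtain ⟨haD, rfl⟩ := hmem.2 (Or.inl rfl)
  obtain ⟨hbD, hcb⟩ := hmem.2 (Or.inr rfl)
  have hrest : sgn R (colorKey c) a ((D.erase a).erase b) =
      sgn R (colorKey c) b ((D.erase a).erase b) := by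
    refine prod_congr rfl fun y hy ↦ ?_
    obtain ⟨hyb, hya, hyD⟩ : y ≠ b ∧ y ≠ a ∧ y ∈ D := by simpa only [mem_erase] using hy
    have hcy : c y ≠ c a := fun h ↦ (hmem.1 ⟨hyD, h⟩).elim hya hyb
    simp only [colorKey_lt_colorKey_iff hcy, colorKey_lt_colorKey_iff (hcb ▸ hcy), hcb]
  have split {x y : V} (hx : x ∈ D) (hxy : x ≠ y) : sgn R (colorKey c) y D =
      (if colorKey c x < colorKey c y then -1 else 1) *
        sgn R (colorKey c) y ((D.erase y).erase x) := by
    rw [← sgn_erase_self]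
    exact (mul_prod_erase _ _ (mem_erase.2 ⟨hxy, hx⟩)).symm
  rw [hpart, sum_pair hab, split hbD hab.symm, split haD hab, erase_right_comm (a := b), hrest,
    ite_lt_eq_neg_ite_gt colorKey_injective hab]
  ring

variable [Fintype ι]

variable (R c) in
/-- The cocycle supported on the cubes `[B, A]` in which every colour has one vertex in `B` and two
in `A`: the product over the colours `i` of the `1`-cocycles dual to the edge from `1` to `2`,
pulled back along `A ↦ (#(part c A i))ᵢ`. -/
def rainbowCocycle (B A : Finset V) : R :=
  if B ⊆ A ∧ ∀ i, #(part c B i) = 1 ∧ #(part c A i) = 2 then 1 else 0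

lemma rainbowCocycle_ne_zero {A B : Finset V} (h : rainbowCocycle R c B A ≠ 0) :
    B ⊆ A ∧ ∀ i, #(part c B i) = 1 ∧ #(part c A i) = 2 :=
  of_not_not fun h' ↦ h (if_neg h')

lemma rainbowCocycle_congr {A B A' B' : Finset V} (hsub : B ⊆ A ↔ B' ⊆ A')
    (hB : ∀ i, #(part c B i) = #(part c B' i)) (hA : ∀ i, #(part c A i) = #(part c A' i)) :
    rainbowCocycle R c B A = rainbowCocycle R c B' A' := by
  simp only [rainbowCocycle, hsub, hB, hA]

lemma rainbowCocycle_sub_congr {A B : Finset V} {v w : V} (hv : v ∈ A \ B) (hw : w ∈ A \ B)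
    (h : c v = c w) :
    rainbowCocycle R c (insert v B) A - rainbowCocycle R c B (A.erase v) =
      rainbowCocycle R c (insert w B) A - rainbowCocycle R c B (A.erase w) := by
  obtain ⟨hvA, hvB⟩ := mem_sdiff.1 hv
  obtain ⟨hwA, hwB⟩ := mem_sdiff.1 hw
  refine congrArg₂ (· - ·) (rainbowCocycle_congr ?_ (fun i ↦ ?_) fun _ ↦ rfl)
    (rainbowCocycle_congr ?_ (fun _ ↦ rfl) fun i ↦ ?_)
  · simp only [insert_subset_iff, hvA, hwA]
  · rw [card_part_insert hvB, card_part_insert hwB, h]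
  · simp only [subset_erase, hvB, hwB, not_false_eq_true]
  · have hv' := card_part_erase_add (c := c) hvA i
    have hw' := card_part_erase_add (c := c) hwA i
    rw [h] at hv'
    omega

lemma card_part_sdiff_eq_two {A B : Finset V} {v : V} (hv : v ∈ A \ B)
    (h : rainbowCocycle R c (insert v B) A - rainbowCocycle R c B (A.erase v) ≠ 0) :
    #(part c (A \ B) (c v)) = 2 := by
  obtain ⟨hvA, hvB⟩ := mem_sdiff.1 hv
  by_cases h0 : rainbowCocycle R c (insert v B) A = 0
  · obtain ⟨hBA, hcount⟩ := rainbowCocycle_ne_zero fun h1 ↦ h (by rw [h0, h1, sub_zero])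
    have herase := card_part_erase_add (c := c) hvA (c v)
    rw [if_pos rfl, (hcount (c v)).2] at herase
    rw [card_part_sdiff (hBA.trans (erase_subset v A)), ← herase, (hcount (c v)).1]
  · obtain ⟨hBA, hcount⟩ := rainbowCocycle_ne_zero h0
    have hinsert := card_part_insert (c := c) hvB (c v)
    rw [if_pos rfl, (hcount (c v)).1] at hinsert
    rw [card_part_sdiff ((subset_insert v B).trans hBA), (hcount (c v)).2]
    omega

theorem cubicalCoboundary_rainbowCocycle :
    cubicalCoboundary R (colorKey c) (rainbowCocycle R c) = 0 := by
  ext B A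
  rw [cubicalCoboundary_apply, ← sum_fiberwise (A \ B) c]
  refine sum_eq_zero fun i _ ↦ ?_
  by_contra hne
  obtain ⟨v, hv, hvne⟩ := exists_ne_zero_of_sum_ne_zero hne
  obtain ⟨hvD, rfl⟩ := mem_filter.1 hv
  refine hne ?_
  calc ∑ w ∈ part c (A \ B) (c v), sgn R (colorKey c) w (A \ B) *
        (rainbowCocycle R c (insert w B) A - rainbowCocycle R c B (A.erase w))
      = (∑ w ∈ part c (A \ B) (c v), sgn R (colorKey c) w (A \ B)) *
          (rainbowCocycle R c (insert v B) A - rainbowCocycle R c B (A.erase v)) := by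
        rw [sum_mul]
        refine sum_congr rfl fun w hw ↦ ?_
        rw [rainbowCocycle_sub_congr (mem_part.1 hw).1 hvD (mem_part.1 hw).2]
    _ = 0 := by
        rw [sum_sgn_part_eq_zero (card_part_sdiff_eq_two hvD (right_ne_zero_of_mul hvne)), zero_mul]

lemma rainbowCocycle_mem_relCochains {W : Finset V} {X : Set (Finset V)}
    (hX : ∀ σ ⊆ W, (∀ i, #(part c σ i) ≤ 1) → σ ∈ X) :
    rainbowCocycle R c ∈ relCochains R W X (crowdedSets c) (Fintype.card ι) := by
  intro B A hAW h
  obtain ⟨hBA, hcount⟩ := rainbowCocycle_ne_zero h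
  refine ⟨hX B (hBA.trans hAW) fun i ↦ (hcount i).1.le, fun i ↦ (hcount i).2.ge, hBA, ?_⟩
  rw [card_eq_sum_card_part (c := c) A, card_eq_sum_card_part (c := c) B]
  simp only [hcount, sum_const, card_univ, smul_eq_mul]
  ring

end RainbowCocycle

section Staircase

lemma sum_piFinset_Ico_update_sub_eq_zero {ι M : Type*} [Fintype ι] [DecidableEq ι]
    [AddCommGroup M] (a b : ι → ℕ) (i : ι) (h : (ι → ℕ) → M) (ha : ∀ k, k i = a i → h k = 0)
    (hb : ∀ k, k i = b i → h k = 0) :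
    ∑ k ∈ Fintype.piFinset fun j ↦ Ico (a j) (b j),
      (h (Function.update k i (k i + 1)) - h k) = 0 := by
  rw [sum_sub_distrib, sub_eq_zero]
  have hself (k : ι → ℕ) : Function.update k i (k i + 1) i = k i + 1 := Function.update_self ..
  refine sum_bij_ne_zero (fun k _ _ ↦ Function.update k i (k i + 1)) ?_ ?_ ?_ fun _ _ _ ↦ rfl
  · intro k hk hne
    simp only [Fintype.mem_piFinset, mem_Ico] at hk ⊢
    intro j
    have hki : k i + 1 ≠ b i := fun h' ↦ hne (hb _ ((hself k).trans h'))
    obtain rfl | hj := eq_or_ne j i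
    · rw [hself]
      have := hk j
      omega
    · rw [Function.update_of_ne hj]
      exact hk j
  · intro k _ _ l _ _ hkl
    funext j
    have hj := congrFun hkl j
    obtain rfl | hj' := eq_or_ne j i
    · simpa only [hself, Nat.add_right_cancel_iff] using hj
    · simpa only [Function.update_of_ne hj'] using hj
  · intro k hk hne
    simp only [Fintype.mem_piFinset, mem_Ico] at hk
    have hki : k i ≠ a i := fun h' ↦ hne (ha k h')
    have hkk : Function.update (Function.update k i (k i - 1)) i
        (Function.update k i (k i - 1) i + 1) = k := by
      rw [Function.update_idem, Function.update_self, Nat.sub_add_cancel (by have := hk i; omega),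
        Function.update_eq_self]
    refine ⟨Function.update k i (k i - 1), ?_, by rwa [hkk], hkk⟩
    simp only [Fintype.mem_piFinset, mem_Ico]
    intro j
    have := hk j
    obtain rfl | hj := eq_or_ne j i
    · rw [Function.update_self]
      omega
    · rwa [Function.update_of_ne hj]

variable {ι : Type*} {c : V → ι} {W : Finset V} {ρ : V → ℕ}

variable (c W ρ) in
/-- The vertices of `W` whose rank `ρ` within their colour `i` is below `k i`. For an enumeration
`ρ` of each colour (see `IsRanking`), these are the first `k i` vertices of each colour `i`. -/
def initial (k : ι → ℕ) : Finset V := {v ∈ W | ρ v < k (c v)}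

lemma mem_initial {k : ι → ℕ} {v : V} : v ∈ initial c W ρ k ↔ v ∈ W ∧ ρ v < k (c v) := mem_filter

lemma initial_subset (k : ι → ℕ) : initial c W ρ k ⊆ W := filter_subset _ _

lemma initial_mono {k l : ι → ℕ} (h : k ≤ l) : initial c W ρ k ⊆ initial c W ρ l :=
  monotone_filter_right _ fun v _ hv ↦ hv.trans_le (h (c v))

lemma mem_initial_succ_sdiff_initial [DecidableEq V] {k : ι → ℕ} {v : V} :
    v ∈ initial c W ρ (k + 1) \ initial c W ρ k ↔ v ∈ W ∧ ρ v = k (c v) := by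
  simp only [mem_sdiff, mem_initial, Pi.add_apply, Pi.one_apply]
  grind

variable [DecidableEq ι]

variable (c W ρ) in
/-- `ρ` enumerates the vertices of `W` of each colour, starting from `0`. -/
def IsRanking : Prop := ∀ i, Set.BijOn ρ (part c W i) (range #(part c W i))

variable (c W) in
lemma exists_isRanking : ∃ ρ : V → ℕ, IsRanking c W ρ := by
  have hrank (i : ι) : ∃ ρ : V → ℕ, Set.BijOn ρ (part c W i) (range #(part c W i)) :=
    (part c W i).finite_toSet.exists_bijOn_of_encard_eq
      (by simp only [Set.encard_coe_eq_coe_finsetCard, card_range])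
  choose ρ hρ using hrank
  exact ⟨fun v ↦ ρ (c v) v, fun i ↦ (hρ i).congr fun v hv ↦ by rw [(mem_part.1 hv).2]⟩

lemma IsRanking.part_subset_initial (hρ : IsRanking c W ρ) {k : ι → ℕ} {i : ι}
    (hk : k i = #(part c W i)) : part c W i ⊆ initial c W ρ k := by
  intro v hv
  obtain ⟨hvW, rfl⟩ := mem_part.1 hv
  exact mem_initial.2 ⟨hvW, hk ▸ mem_range.1 ((hρ (c v)).mapsTo hv)⟩

lemma IsRanking.card_part_initial (hρ : IsRanking c W ρ) {k : ι → ℕ} {i : ι}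
    (hk : k i ≤ #(part c W i)) : #(part c (initial c W ρ k) i) = k i := by
  have hmem {v} : v ∈ part c (initial c W ρ k) i ↔ v ∈ part c W i ∧ ρ v < k i := by
    simp only [mem_part, mem_initial]
    constructor
    · rintro ⟨⟨hvW, hv⟩, rfl⟩
      exact ⟨⟨hvW, rfl⟩, hv⟩
    · rintro ⟨⟨hvW, rfl⟩, hv⟩
      exact ⟨⟨hvW, hv⟩, rfl⟩
  rw [← card_range (k i)]
  refine card_nbij ρ (fun v hv ↦ mem_range.2 (hmem.1 hv).2)
    ((hρ i).injOn.mono fun v hv ↦ (hmem.1 hv).1) fun n hn ↦ ?_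
  have hn : n < k i := mem_range.1 hn
  obtain ⟨v, hv, rfl⟩ := (hρ i).surjOn (mem_range.2 (hn.trans_le hk))
  exact ⟨v, hmem.2 ⟨hv, hn⟩, rfl⟩

lemma IsRanking.eq_of_rank_eq (hρ : IsRanking c W ρ) {v w : V} (hv : v ∈ W) (hw : w ∈ W)
    (hc : c v = c w) (h : ρ v = ρ w) : v = w :=
  (hρ (c w)).injOn (mem_part.2 ⟨hv, hc⟩) (mem_part.2 ⟨hw, rfl⟩) h

variable [DecidableEq V]

lemma IsRanking.bijOn_initial_succ_sdiff_initial (hρ : IsRanking c W ρ) {k : ι → ℕ}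
    (hk : ∀ i, k i < #(part c W i)) :
    Set.BijOn c ↑(initial c W ρ (k + 1) \ initial c W ρ k) Set.univ := by
  refine ⟨Set.mapsTo_univ _ _, fun v hv w hw hc ↦ ?_, fun i _ ↦ ?_⟩
  · obtain ⟨hvW, hv⟩ := mem_initial_succ_sdiff_initial.1 (mem_coe.1 hv)
    obtain ⟨hwW, hw⟩ := mem_initial_succ_sdiff_initial.1 (mem_coe.1 hw)
    exact hρ.eq_of_rank_eq hvW hwW hc (by rw [hv, hw, hc])
  · obtain ⟨v, hv, hvk⟩ := (hρ i).surjOn (mem_range.2 (hk i))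
    obtain ⟨hvW, rfl⟩ := mem_part.1 hv
    exact ⟨v, mem_initial_succ_sdiff_initial.2 ⟨hvW, hvk⟩, rfl⟩

lemma IsRanking.insert_initial (hρ : IsRanking c W ρ) {k : ι → ℕ} {v : V} (hv : v ∈ W)
    (hvk : ρ v = k (c v)) :
    insert v (initial c W ρ k) = initial c W ρ (Function.update k (c v) (k (c v) + 1)) := by
  ext w
  rw [mem_insert, mem_initial, mem_initial]
  by_cases hc : c w = c v
  · rw [hc, Function.update_self, Nat.lt_succ_iff_lt_or_eq, ← hvk]
    constructor
    · rintro (rfl | ⟨hw, hlt⟩)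
      exacts [⟨hv, Or.inr rfl⟩, ⟨hw, Or.inl hlt⟩]
    · rintro ⟨hw, hlt | heq⟩
      exacts [Or.inr ⟨hw, hlt⟩, Or.inl (hρ.eq_of_rank_eq hw hv hc heq)]
  · rw [Function.update_of_ne hc]
    exact or_iff_right fun h ↦ hc (congrArg c h)

lemma IsRanking.erase_initial_succ (hρ : IsRanking c W ρ) {k : ι → ℕ} {v : V} (hv : v ∈ W)
    (hvk : ρ v = k (c v)) :
    (initial c W ρ (k + 1)).erase v = initial c W ρ (Function.update (k + 1) (c v) (k (c v))) := by
  set l := Function.update (k + 1) (c v) (k (c v)) with hl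
  have hlv : l (c v) = k (c v) := Function.update_self ..
  have hvl : v ∉ initial c W ρ l := fun h ↦ (mem_initial.1 h).2.ne (hvk.trans hlv.symm)
  have hinsert := hρ.insert_initial hv (hvk.trans hlv.symm)
  rw [hlv, hl, Function.update_idem, ← hl] at hinsert
  rw [← erase_insert hvl, hinsert]
  congr 2
  exact (Function.update_eq_self (c v) (k + 1)).symm

end Staircase

section Evaluation

variable {R ι : Type*} [CommRing R] [LinearOrder ι] [Fintype ι] [LinearOrder V] {c : V → ι}
  {W : Finset V} {ρ : V → ℕ}

lemma sgn_colorKey_of_bijOn {D : Finset V} (hD : Set.BijOn c D Set.univ) {v : V} (hv : v ∈ D) :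
    sgn R (colorKey c) v D = sgn R id (c v) univ := by
  refine prod_nbij c (fun _ _ ↦ mem_univ _) hD.injOn (by simpa using hD.surjOn) fun y hy ↦ ?_
  obtain rfl | hne := eq_or_ne y v
  · simp
  · have hc : c y ≠ c v := hD.injOn.ne hy hv hne
    simp only [colorKey_lt_colorKey_iff hc, id_def]

lemma IsRanking.cubicalCoboundary_initial (hρ : IsRanking c W ρ) {k : ι → ℕ}
    (hk : ∀ i, k i < #(part c W i)) (φ : Finset V → Finset V → R) :
    cubicalCoboundary R (colorKey c) φ (initial c W ρ k) (initial c W ρ (k + 1)) =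
      ∑ i, sgn R id i univ *
        (φ (initial c W ρ (Function.update k i (k i + 1))) (initial c W ρ (k + 1)) -
          φ (initial c W ρ k) (initial c W ρ (Function.update (k + 1) i (k i)))) := by
  have hbij := hρ.bijOn_initial_succ_sdiff_initial hk
  refine sum_nbij c (fun _ _ ↦ mem_univ _) hbij.injOn (by simpa using hbij.surjOn) fun v hv ↦ ?_
  obtain ⟨hvW, hvk⟩ := mem_initial_succ_sdiff_initial.1 hv
  rw [sgn_colorKey_of_bijOn hbij hv, hρ.insert_initial hvW hvk, hρ.erase_initial_succ hvW hvk]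

/-- The sum of a cochain over the cubes `[initial k, initial (k + 1)]`, `1 ≤ k i < #(part c W i)`,
i.e. its value on the product of the monotone lattice paths through the colour classes. -/
def staircaseSum (c : V → ι) (W : Finset V) (ρ : V → ℕ) (φ : Finset V → Finset V → R) : R :=
  ∑ k ∈ Fintype.piFinset fun i ↦ Ico 1 #(part c W i),
    φ (initial c W ρ k) (initial c W ρ (k + 1))

theorem IsRanking.staircaseSum_cubicalCoboundary (hρ : IsRanking c W ρ) {X : Set (Finset V)}
    (hX : IsComplex X) (hpart : ∀ i, part c W i ∉ X) (hne : ∀ i, 1 ≤ #(part c W i)) {p : ℕ}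
    {φ : Finset V → Finset V → R} (hφ : φ ∈ relCochains R W X (crowdedSets c) p) :
    staircaseSum c W ρ (cubicalCoboundary R (colorKey c) φ) = 0 := by
  let h (i : ι) (k : ι → ℕ) : R :=
    φ (initial c W ρ k) (initial c W ρ (Function.update (k + 1) i (k i)))
  have hlow (i) (k : ι → ℕ) (hk : k i = 1) : h i k = 0 := by
    by_contra h0
    have htwo := (hφ _ _ (initial_subset _) h0).2.1 i
    have hone : Function.update (k + 1) i (k i) i = 1 := by rw [Function.update_self, hk]
    rw [hρ.card_part_initial (hone.trans_le (hne i)), hone] at htwo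
    exact absurd htwo (by decide)
  have hhigh (i) (k : ι → ℕ) (hk : k i = #(part c W i)) : h i k = 0 := by
    by_contra h0
    exact hpart i (hX _ (hφ _ _ (initial_subset _) h0).1 _ (hρ.part_subset_initial hk))
  have hshift (i) (k : ι → ℕ) : Function.update (Function.update k i (k i + 1) + 1) i
      (Function.update k i (k i + 1) i) = k + 1 := by
    ext j
    obtain rfl | hj := eq_or_ne j i <;> simp [*]
  calc staircaseSum c W ρ (cubicalCoboundary R (colorKey c) φ)
      = ∑ k ∈ Fintype.piFinset fun i ↦ Ico 1 #(part c W i),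
          ∑ i, sgn R id i univ * (h i (Function.update k i (k i + 1)) - h i k) := by
        refine sum_congr rfl fun k hk ↦ ?_
        rw [hρ.cubicalCoboundary_initial fun i ↦ (mem_Ico.1 (Fintype.mem_piFinset.1 hk i)).2]
        simp only [h, hshift]
    _ = ∑ i, sgn R id i univ * ∑ k ∈ Fintype.piFinset fun i ↦ Ico 1 #(part c W i),
          (h i (Function.update k i (k i + 1)) - h i k) := by
        rw [sum_comm]
        simp only [mul_sum]
    _ = 0 := sum_eq_zero fun i _ ↦ by
        rw [sum_piFinset_Ico_update_sub_eq_zero _ _ i (h i) (hlow i) (hhigh i), mul_zero]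

theorem IsRanking.staircaseSum_rainbowCocycle (hρ : IsRanking c W ρ)
    (htwo : ∀ i, 2 ≤ #(part c W i)) : staircaseSum c W ρ (rainbowCocycle R c) = 1 := by
  rw [staircaseSum, sum_eq_single 1]
  · refine if_pos ⟨initial_mono (le_add_of_nonneg_right zero_le_one), fun i ↦ ⟨?_, ?_⟩⟩
    · exact hρ.card_part_initial (one_le_two.trans (htwo i))
    · exact hρ.card_part_initial (htwo i)
  · intro k hk hne
    by_contra h0
    refine hne (funext fun i ↦ ?_)
    rw [← hρ.card_part_initial (mem_Ico.1 (Fintype.mem_piFinset.1 hk i)).2.le]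
    exact ((rainbowCocycle_ne_zero h0).2 i).1
  · exact fun h ↦ absurd (Fintype.mem_piFinset.2 fun i ↦ mem_Ico.2 ⟨le_rfl, htwo i⟩) h

end Evaluation

theorem exists_part_mem_of_isLeray {ι : Type*} [LinearOrder ι] [Fintype ι] [LinearOrder V]
    {F : Type} [Field F] {d : ℕ} (hd : d < Fintype.card ι) {X : Set (Finset V)} (hX : IsComplex X)
    (hL : IsLeray F d X) {c : V → ι} {W : Finset V}
    (hjoin : ∀ σ ⊆ W, (∀ i, #(part c σ i) ≤ 1) → σ ∈ X) : ∃ i, part c W i ∈ X := by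
  by_contra! hpart
  have htwo (i : ι) : 2 ≤ #(part c W i) := by
    by_contra! hlt
    exact hpart i (hjoin _ (filter_subset _ _) fun j ↦
      (card_le_card (filter_subset _ _)).trans (Nat.le_of_lt_succ hlt))
  obtain ⟨p, hp⟩ : ∃ p, Fintype.card ι = p + 1 :=
    Nat.exists_eq_succ_of_ne_zero (Nat.zero_lt_of_lt hd).ne'
  have hlarge (A) (hA : A ∈ crowdedSets c) : d + p + 2 ≤ #A := by
    have := two_mul_card_le_card hA
    omega
  obtain ⟨w, hw, hwq⟩ := exists_cubicalCoboundary_eq hX hL colorKey_injective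
    isUpperSet_crowdedSets hlarge (hp ▸ rainbowCocycle_mem_relCochains (R := F) hjoin)
    cubicalCoboundary_rainbowCocycle
  obtain ⟨ρ, hρ⟩ := exists_isRanking c W
  have heq : (1 : F) = 0 := calc
    1 = staircaseSum c W ρ (rainbowCocycle F c) := (hρ.staircaseSum_rainbowCocycle htwo).symm
    _ = staircaseSum c W ρ (cubicalCoboundary F (colorKey c) w) :=
        sum_congr rfl fun k _ ↦ (hwq _ (initial_subset _) _).symm
    _ = 0 := hρ.staircaseSum_cubicalCoboundary hX hpart (fun i ↦ one_le_two.trans (htwo i)) hw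
  exact one_ne_zero heq

end ColorfulHelly

theorem topological_colorful_helly_partition_general {V ι : Type*} [LinearOrder V] [Fintype ι]
    (F : Type) [Field F] {d : ℕ} (hd : d < Fintype.card ι) {X : Set (Finset V)} (hX : IsComplex X)
    (hLeray : IsLeray F d X) (P : ι → Finset V) (hdisj : ∀ i j, i ≠ j → Disjoint (P i) (P j))
    (hjoin : ∀ σ : Finset V, (∀ v ∈ σ, ∃ i, v ∈ P i) → (∀ i, #(σ ∩ P i) ≤ 1) → σ ∈ X) :
    ∃ i, P i ∈ X := by
  let : LinearOrder ι := LinearOrder.lift' (Fintype.equivFin ι) (Fintype.equivFin ι).injective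
  have : Nonempty ι := Fintype.card_pos_iff.1 (Nat.zero_lt_of_lt hd)
  obtain ⟨c, hc⟩ := ColorfulHelly.exists_coloring hdisj
  have hpart {σ : Finset V} (hσ : σ ⊆ univ.biUnion P) (i : ι) :
      ColorfulHelly.part c σ i = σ ∩ P i := by
    ext v
    rw [ColorfulHelly.mem_part, mem_inter, and_congr_right_iff]
    intro hv
    obtain ⟨j, -, hj⟩ := mem_biUnion.1 (hσ hv)
    rw [hc j v hj]
    exact ⟨fun h ↦ h ▸ hj, fun h ↦ (hc j v hj).symm.trans (hc i v h)⟩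
  obtain ⟨i, hi⟩ := ColorfulHelly.exists_part_mem_of_isLeray hd hX hLeray (c := c)
    (W := univ.biUnion P) fun σ hσ hcard ↦ hjoin σ (fun v hv ↦ by simpa using hσ hv) fun i ↦
      hpart hσ i ▸ hcard i
  rw [hpart subset_rfl, inter_eq_right.2 (subset_biUnion_of_mem P (mem_univ i))] at hi
  exact ⟨i, hi⟩

/-- **The Topological Colorful Helly Theorem** (Kalai–Meshulam).
Let `V = P 0 ∪ ⋯ ∪ P d` be a partition of the finite vertex set `V` and let `X` be a
`d`-Leray complex over the field `F` on `V` containing the join `P 0 * ⋯ * P d` (i.e.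
every set meeting each part in at most one vertex is a simplex of `X`).  Then some part
`P i` is a simplex of `X`. -/
theorem topological_colorful_helly_partition
    {V : Type} [Fintype V] [LinearOrder V] (F : Type) [Field F]
    (d : ℕ) (X : Set (Finset V)) (hX : IsComplex X)
    (hLeray : IsLeray F d X)
    (P : Fin (d + 1) → Finset V)
    (hdisj : ∀ i j, i ≠ j → Disjoint (P i) (P j))
    (hcover : ∀ v : V, ∃ i, v ∈ P i)
    (hjoin : ∀ σ : Finset V, (∀ i, (σ ∩ P i).card ≤ 1) → σ ∈ X) :
    ∃ i, P i ∈ X :=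
  topological_colorful_helly_partition_general F (by simp) hX hLeray P hdisj fun σ _ ↦ hjoin σ
end

section
/- Let M be a matroid with rank function ρ_M, identified with the simplicial complex of its independent sets, and let X be a d-Leray complex over some field F, both on the same finite vertex set V. If M ⊆ X, then there exists a simplex σ ∈ X such that ρ_M(V \ σ) ≤ d. -/
open Finset

variable {V : Type*}

/-- The rank `ρ_M(S)` of a set `S` in a matroid `M`: the maximal cardinality of an
independent subset of `S`. -/
noncomputable def matroidRank {V : Type*} (M : Matroid V) (S : Set V) : ℕ :=
  sSup {n | ∃ I : Finset V, ↑I ⊆ S ∧ M.Indep ↑I ∧ I.card = n}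

/-- The matroid `M`, identified with the simplicial complex of its independent sets. -/
def indepComplex {V : Type*} (M : Matroid V) : Set (Finset V) :=
  {σ | M.Indep ↑σ}

/-!
Suppose `M` has rank greater than `d` on `V \ α` for every `α ∈ X`, and let `Y ⊆ X` agree with `M`
up to dimension `d` and with `X` above. Cycles of `Y[V \ α]` of dimension less than `d` bound
because the independence complex of a matroid of rank `r` is acyclic below dimension `r - 1`, the
others because `X` is `d`-Leray. So every `Y[V \ α]` with `α ∈ X` has vanishing reduced homology,
and this is impossible by a fixed-point argument: `α ↦ Y[V \ α]` would be an acyclic carrier from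
the barycentric subdivision of `X` to `X` that moves every simplex off itself, contrary to the
Lefschetz principle.

Concretely, subdivide a simplex `β` into the cubes `[α, α ∪ γ]` with `α ∪ γ ⊆ β` and choose,
inductively on the dimension of the cube, chains `ψ(α, γ)` of `Y[V \ α]` whose boundary is given by
the boundary of the cube. For `h β = ψ(∅, β)` the boundary formula reads
`∂ h β = h ∂ β - ∑ ± ψ({v}, β \ v)`, plus the empty simplex when `β = ∅`. No `ψ({v}, β \ v)`
involves `β`, so only `β = ∅` contributes to the trace of `∂ h - h ∂`, which is thus both `1` and
`0`.
-/

section Sign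

variable [LinearOrder V] (R : Type*) [CommRing R]

/-- The sign with which the facet `σ \ {v}` occurs in the boundary of the simplex `σ`. -/
def vertexSign (v : V) (σ : Finset V) : R := (-1) ^ #{y ∈ σ | y < v}

lemma vertexSign_mul_self (v : V) (σ : Finset V) : vertexSign R v σ * vertexSign R v σ = 1 := by
  simp [vertexSign, ← mul_pow]

lemma vertexSign_erase (x : V) {y : V} {σ : Finset V} (hy : y ∈ σ) :
    vertexSign R x (σ.erase y) = (if y < x then -1 else 1) * vertexSign R x σ := by
  rw [vertexSign, filter_erase]
  split_ifs with hyx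
  · rw [vertexSign, ← card_erase_add_one (mem_filter.2 ⟨hy, hyx⟩), pow_succ]
    ring
  · rw [erase_eq_of_notMem (by simp [hyx]), one_mul, vertexSign]

lemma vertexSign_erase_self (v : V) (σ : Finset V) :
    vertexSign R v (σ.erase v) = vertexSign R v σ := by
  by_cases hv : v ∈ σ
  · simp [vertexSign_erase R v hv]
  · rw [erase_eq_of_notMem hv]

lemma vertexSign_insert_self (v : V) (σ : Finset V) :
    vertexSign R v (insert v σ) = vertexSign R v σ := by
  rw [← vertexSign_erase_self, erase_insert_eq_erase, vertexSign_erase_self]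

lemma vertexSign_mul_vertexSign_erase {x y : V} {σ : Finset V} (hx : x ∈ σ) (hy : y ∈ σ)
    (hxy : x ≠ y) :
    vertexSign R x σ * vertexSign R y (σ.erase x) =
      -(vertexSign R y σ * vertexSign R x (σ.erase y)) := by
  rw [vertexSign_erase R y hx, vertexSign_erase R x hy]
  rcases hxy.lt_or_gt with h | h <;> simp only [h, h.not_gt, if_true, if_false] <;> ring

lemma vertexSign_mul_vertexSign_insert {v x : V} {σ : Finset V} (hv : v ∉ σ) (hx : x ∈ σ) :
    vertexSign R v σ * vertexSign R x (insert v σ) =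
      -(vertexSign R x σ * vertexSign R v (σ.erase x)) := by
  have hvx : v ≠ x := (ne_of_mem_of_not_mem hx hv).symm
  have h := vertexSign_mul_vertexSign_erase R (mem_insert_self v σ) (mem_insert_of_mem hx) hvx
  rw [erase_insert hv, erase_insert_of_ne hvx, vertexSign_insert_self, vertexSign_insert_self] at h
  linear_combination vertexSign R x σ * vertexSign R x (insert v σ) * h
    - vertexSign R v σ * vertexSign R x (insert v σ) * vertexSign_mul_self R x σ
    - vertexSign R x σ * vertexSign R v (σ.erase x) * vertexSign_mul_self R x (insert v σ)

variable {R}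

lemma sum_sum_erase_vertexSign_smul_eq_zero {A : Type*} [AddCommGroup A] [Module R A]
    {f : V → V → A} (hf : ∀ x y, f x y = f y x) (σ : Finset V) :
    ∑ x ∈ σ, ∑ y ∈ σ.erase x, (vertexSign R x σ * vertexSign R y (σ.erase x)) • f x y = 0 := by
  rw [sum_sigma']
  refine sum_involution (fun p _ => ⟨p.2, p.1⟩) ?_ ?_ ?_ (fun _ _ => rfl)
  · rintro ⟨x, y⟩ hxy
    simp only [mem_sigma, mem_erase] at hxy
    rw [vertexSign_mul_vertexSign_erase R hxy.1 hxy.2.2 hxy.2.1.symm, hf x y, neg_smul,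
      neg_add_cancel]
  · rintro ⟨x, y⟩ hxy - h
    simp only [mem_sigma, mem_erase] at hxy
    exact hxy.2.1 (congrArg Sigma.fst h)
  · rintro ⟨x, y⟩ hxy
    simp only [mem_sigma, mem_erase] at hxy ⊢
    exact ⟨hxy.2.2, hxy.2.1.symm, hxy.1⟩

end Sign

lemma linearCombination_mem_of_mem_supported {R ι A : Type*} [Semiring R] [AddCommMonoid A]
    [Module R A] {f : ι → A} {s : Set ι} {N : Submodule R A} (hf : ∀ i ∈ s, f i ∈ N) {c : ι →₀ R}
    (hc : c ∈ Finsupp.supported R R s) : Finsupp.linearCombination R f c ∈ N :=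
  Submodule.sum_mem N fun i hi => N.smul_mem _ (hf i (hc hi))

section Chain

variable [LinearOrder V] {R : Type*} [CommRing R]

/-- The simplicial boundary map on formal combinations of arbitrary finite subsets of `V`. The
augmented chain complex of every complex on `V` is a subcomplex of this one. -/
noncomputable def bdry : (Finset V →₀ R) →ₗ[R] (Finset V →₀ R) :=
  Finsupp.linearCombination R fun σ => ∑ v ∈ σ, vertexSign R v σ • Finsupp.single (σ.erase v) 1

lemma bdry_single (σ : Finset V) :
    bdry (Finsupp.single σ (1 : R)) = ∑ v ∈ σ, vertexSign R v σ • Finsupp.single (σ.erase v) 1 := by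
  simp [bdry]

lemma bdry_single_empty : bdry (Finsupp.single (∅ : Finset V) (1 : R)) = 0 := by
  rw [bdry_single, sum_empty]

lemma bdry_bdry (c : Finset V →₀ R) : bdry (bdry c) = 0 := by
  suffices h : bdry ∘ₗ bdry = (0 : (Finset V →₀ R) →ₗ[R] _) from LinearMap.congr_fun h c
  refine Finsupp.lhom_ext' fun σ => LinearMap.ext_ring ?_
  simp only [LinearMap.comp_apply, Finsupp.lsingle_apply, bdry_single, map_sum, map_smul,
    smul_sum, smul_smul, LinearMap.zero_apply]
  exact sum_sum_erase_vertexSign_smul_eq_zero (fun x y => by rw [erase_right_comm]) σ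

lemma bdry_mem_supported {s t : Set (Finset V)} (h : ∀ σ ∈ s, ∀ x ∈ σ, σ.erase x ∈ t)
    {c : Finset V →₀ R} (hc : c ∈ Finsupp.supported R R s) : bdry c ∈ Finsupp.supported R R t :=
  linearCombination_mem_of_mem_supported (fun σ hσ => Submodule.sum_mem _ fun x hx =>
    Submodule.smul_mem _ _ (Finsupp.single_mem_supported R 1 (h σ hσ x hx))) hc

/-- The cone operator with apex `v`: on simplices it is the exterior product with `v`. -/
noncomputable def cone (v : V) : (Finset V →₀ R) →ₗ[R] (Finset V →₀ R) :=
  Finsupp.linearCombination R fun σ =>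
    if v ∈ σ then 0 else vertexSign R v σ • Finsupp.single (insert v σ) 1

lemma cone_single_of_mem {v : V} {σ : Finset V} (hv : v ∈ σ) :
    cone v (Finsupp.single σ (1 : R)) = 0 := by
  simp [cone, hv]

lemma cone_single_of_notMem {v : V} {σ : Finset V} (hv : v ∉ σ) :
    cone v (Finsupp.single σ (1 : R)) = vertexSign R v σ • Finsupp.single (insert v σ) 1 := by
  simp [cone, hv]

lemma bdry_cone_single (v : V) (σ : Finset V) :
    bdry (cone v (Finsupp.single σ (1 : R))) =
      Finsupp.single σ 1 - cone v (bdry (Finsupp.single σ 1)) := by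
  rw [bdry_single, map_sum]
  simp only [map_smul]
  by_cases hv : v ∈ σ
  · have hfacet : ∀ x ∈ σ, x ≠ v →
        vertexSign R x σ • cone v (Finsupp.single (σ.erase x) (1 : R)) = 0 := fun x _ hxv => by
      rw [cone_single_of_mem (mem_erase.2 ⟨hxv.symm, hv⟩), smul_zero]
    rw [cone_single_of_mem hv, map_zero, sum_eq_single_of_mem v hv hfacet,
      cone_single_of_notMem (notMem_erase v σ), vertexSign_erase_self, smul_smul,
      vertexSign_mul_self, one_smul, insert_erase hv, sub_self]
  · rw [cone_single_of_notMem hv, map_smul, bdry_single, sum_insert hv, vertexSign_insert_self,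
      erase_insert hv, smul_add, smul_smul, vertexSign_mul_self, one_smul, sub_eq_add_neg,
      smul_sum, ← sum_neg_distrib]
    refine congrArg _ (sum_congr rfl fun x hx => ?_)
    rw [cone_single_of_notMem fun h => hv (mem_of_mem_erase h), smul_smul, smul_smul,
      vertexSign_mul_vertexSign_insert R hv hx, neg_smul,
      erase_insert_of_ne (ne_of_mem_of_not_mem hx hv).symm]

lemma bdry_cone (v : V) (c : Finset V →₀ R) : bdry (cone v c) = c - cone v (bdry c) := by
  suffices h : bdry ∘ₗ cone v = (LinearMap.id - cone v ∘ₗ bdry : (Finset V →₀ R) →ₗ[R] _) from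
    LinearMap.congr_fun h c
  exact Finsupp.lhom_ext' fun σ => LinearMap.ext_ring (bdry_cone_single v σ)

lemma cone_mem_supported {s t : Set (Finset V)} {v : V} (h : ∀ σ ∈ s, v ∉ σ → insert v σ ∈ t)
    {c : Finset V →₀ R} (hc : c ∈ Finsupp.supported R R s) :
    cone v c ∈ Finsupp.supported R R t := by
  refine linearCombination_mem_of_mem_supported (fun σ hσ => ?_) hc
  split_ifs with hv
  · exact Submodule.zero_mem _
  · exact Submodule.smul_mem _ _ (Finsupp.single_mem_supported R 1 (h σ hσ hv))

lemma cone_eq_zero {v : V} {c : Finset V →₀ R}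
    (hc : c ∈ Finsupp.supported R R {σ : Finset V | v ∈ σ}) : cone v c = 0 := by
  have h : cone v c ∈ Finsupp.supported R R ∅ := 
    cone_mem_supported (fun _ hσ hv => absurd hσ hv) hc
  simpa using h

end Chain

section Complex

lemma isComplex_induce {X : Set (Finset V)} (hX : IsComplex X) (S : Finset V) :
    IsComplex (induce X S) :=
  fun σ hσ τ hτ => ⟨hX σ hσ.1 τ hτ, hτ.trans hσ.2⟩

variable [DecidableEq V]

lemma mem_link_singleton {X : Set (Finset V)} {v : V} {σ : Finset V} :
    σ ∈ link X {v} ↔ v ∉ σ ∧ insert v σ ∈ X := by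
  simp [link, union_singleton, and_comm]

lemma sep_notMem_induce (X : Set (Finset V)) (T : Finset V) (v : V) :
    {σ ∈ induce X T | v ∉ σ} = induce X (T.erase v) := by
  ext σ
  simp [induce, subset_erase, and_assoc]

end Complex

section Acyclic

variable {R : Type*} [CommRing R]

variable (R) in
/-- The chains spanned by the simplices of `Y` with `k` vertices. Here `Y` is any set of simplices,
not necessarily a complex, and the grading is by cardinality: degree `k` is dimension `k - 1`. -/
def chains (Y : Set (Finset V)) (k : ℕ) : Submodule R (Finset V →₀ R) :=
  Finsupp.supported R R {σ ∈ Y | #σ = k}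

lemma chains_le_chains {Y Z : Set (Finset V)} {k : ℕ} (h : ∀ σ ∈ Y, #σ = k → σ ∈ Z) :
    chains R Y k ≤ chains R Z k :=
  Finsupp.supported_mono fun σ hσ => ⟨h σ hσ.1 hσ.2, hσ.2⟩

variable [LinearOrder V]

lemma cone_mem_chains {Y Z : Set (Finset V)} {k : ℕ} {v : V}
    (h : ∀ σ ∈ Y, #σ = k → v ∉ σ → insert v σ ∈ Z) {c : Finset V →₀ R}
    (hc : c ∈ chains R Y k) : cone v c ∈ chains R Z (k + 1) :=
  cone_mem_supported (t := {σ ∈ Z | #σ = k + 1})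
    (fun σ hσ hv => ⟨h σ hσ.1 hσ.2 hv, by rw [card_insert_of_notMem hv, hσ.2]⟩) hc

variable (R) in
/-- Every cycle of `Y` of degree `k` is the boundary of a chain of `Y`. For a complex `Y` this is
the vanishing of its reduced homology in dimension `k - 1`. -/
def IsAcyclicAt (Y : Set (Finset V)) (k : ℕ) : Prop :=
  ∀ c ∈ chains R Y k, bdry c = 0 → ∃ b ∈ chains R Y (k + 1), bdry b = c

lemma IsAcyclicAt.of_skeleton {Y Z : Set (Finset V)} {k : ℕ} (hZ : IsAcyclicAt R Z k)
    (hYZ : ∀ σ ∈ Y, #σ = k → σ ∈ Z) (hZY : ∀ σ ∈ Z, #σ = k + 1 → σ ∈ Y) :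
    IsAcyclicAt R Y k := fun c hc hbc =>
  let ⟨b, hb, hbc⟩ := hZ c (chains_le_chains hYZ hc) hbc
  ⟨b, chains_le_chains hZY hb, hbc⟩

lemma isAcyclicAt_of_insert_mem {Y : Set (Finset V)} {k : ℕ} {v : V}
    (h : ∀ σ ∈ Y, #σ = k → insert v σ ∈ Y) : IsAcyclicAt R Y k := fun c hc hbc =>
  ⟨cone v c, cone_mem_chains (fun σ hσ hk _ => h σ hσ hk) hc,
    by rw [bdry_cone, hbc, map_zero, sub_zero]⟩

lemma exists_mem_chains_link_of_bdry_eq_zero {X : Set (Finset V)} (hX : IsComplex X) {v : V}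
    {k : ℕ} {c : Finset V →₀ R} (hc : c ∈ chains R X (k + 1)) (hbc : bdry c = 0) :
    ∃ c₀ ∈ chains R {σ ∈ X | v ∉ σ} (k + 1),
      bdry c₀ ∈ chains R (link X {v}) k ∧ c = c₀ - cone v (bdry c₀) := by
  have hsplit : c ∈ chains R {σ ∈ X | v ∉ σ} (k + 1) ⊔ chains R {σ ∈ X | v ∈ σ} (k + 1) := by
    rw [chains, chains, ← Finsupp.supported_union]
    refine Finsupp.supported_mono (fun σ hσ => ?_) hc
    by_cases hv : v ∈ σ
    · exact Or.inr ⟨⟨hσ.1, hv⟩, hσ.2⟩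
    · exact Or.inl ⟨⟨hσ.1, hv⟩, hσ.2⟩
  obtain ⟨c₀, hc₀, c₁, hc₁, rfl⟩ := Submodule.mem_sup.1 hsplit
  have hbdry : bdry c₁ = -bdry c₀ := eq_neg_of_add_eq_zero_right (by rw [← map_add, hbc])
  have hc₁_eq : c₁ = -cone v (bdry c₀) := by
    have hcone : cone v c₁ = 0 := cone_eq_zero (Finsupp.supported_mono (fun σ hσ => hσ.1.2) hc₁)
    have h := bdry_cone v c₁
    rwa [hcone, map_zero, hbdry, map_neg, eq_comm, sub_eq_zero] at h
  refine ⟨c₀, hc₀, ?_, by rw [sub_eq_add_neg, ← hc₁_eq]⟩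
  have hdel : bdry c₀ ∈ Finsupp.supported R R {τ : Finset V | v ∉ τ ∧ #τ = k} :=
    bdry_mem_supported (t := {τ | v ∉ τ ∧ #τ = k}) (fun σ hσ x hx =>
      ⟨fun h => hσ.1.2 (mem_of_mem_erase h),
        by rw [card_erase_of_mem hx, hσ.2, Nat.add_sub_cancel]⟩) hc₀
  have hstar : bdry c₀ ∈ Finsupp.supported R R {τ | insert v τ ∈ X} := by
    rw [← neg_mem_iff, ← hbdry]
    exact bdry_mem_supported (t := {τ | insert v τ ∈ X}) (fun σ hσ x _ =>
      hX σ hσ.1.1 _ (insert_subset hσ.1.2 (erase_subset x σ))) hc₁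
  refine Finsupp.supported_mono ?_ ((Finsupp.supported_inter _ _).ge ⟨hdel, hstar⟩)
  exact fun τ hτ => ⟨mem_link_singleton.2 ⟨hτ.1.1, hτ.2⟩, hτ.1.2⟩

lemma IsAcyclicAt.of_link_of_deletion {X : Set (Finset V)} (hX : IsComplex X) {v : V} {k : ℕ}
    (hlink : IsAcyclicAt R (link X {v}) k) (hdel : IsAcyclicAt R {σ ∈ X | v ∉ σ} (k + 1)) :
    IsAcyclicAt R X (k + 1) := by
  intro c hc hbc
  obtain ⟨c₀, hc₀, hbdry, rfl⟩ := exists_mem_chains_link_of_bdry_eq_zero hX (v := v) hc hbc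
  obtain ⟨b₁, hb₁, hb₁c⟩ := hlink _ hbdry (bdry_bdry c₀)
  have hlink_le : chains R (link X {v}) (k + 1) ≤ chains R {σ ∈ X | v ∉ σ} (k + 1) :=
    chains_le_chains fun σ hσ _ =>
      have hσ := mem_link_singleton.1 hσ
      ⟨hX _ hσ.2 _ (subset_insert v σ), hσ.1⟩
  obtain ⟨b₂, hb₂, hb₂c⟩ := hdel (c₀ - b₁) (sub_mem hc₀ (hlink_le hb₁))
    (by rw [map_sub, hb₁c, sub_self])
  refine ⟨b₂ + cone v b₁, add_mem (chains_le_chains (fun σ hσ _ => hσ.1) hb₂)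
    (cone_mem_chains (fun σ hσ _ _ => (mem_link_singleton.1 hσ).2) hb₁), ?_⟩
  rw [map_add, hb₂c, bdry_cone, hb₁c]
  abel

end Acyclic

section Matroid

open scoped Matroid

lemma isComplex_indepComplex (M : Matroid V) : IsComplex (indepComplex M) :=
  fun _ hσ _ hτ => Matroid.Indep.subset hσ (coe_subset.2 hτ)

lemma eRk_le_eRk_contractElem_add_one {M : Matroid V} {v : V} {T : Set V} (hv : M.IsNonloop v)
    (hvT : v ∈ T) : M.eRk T ≤ (M ／ {v}).eRk (T \ {v}) + 1 := by
  obtain ⟨J, hJ, hvJ⟩ := hv.indep.subset_isBasis'_of_subset (Set.singleton_subset_iff.2 hvT)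
  rw [hJ.eRk_eq_encard, ← Set.encard_sdiff_singleton_add_one (Set.singleton_subset_iff.1 hvJ)]
  gcongr
  exact (hJ.indep.diff_indep_contract_of_subset hvJ).encard_le_eRk_of_subset
    (Set.sdiff_subset_sdiff_left hJ.subset)

lemma exists_mem_isNonloop_of_eRk_pos {M : Matroid V} {T : Set V} (hT : 0 < M.eRk T) :
    ∃ v ∈ T, M.IsNonloop v := by
  obtain ⟨B, hB⟩ := M.exists_isBasis' T
  obtain ⟨v, hv⟩ : B.Nonempty := by rwa [hB.eRk_eq_encard, Set.encard_pos] at hT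
  exact ⟨v, hB.subset hv, hB.indep.isNonloop_of_mem hv⟩

lemma coe_matroidRank_le_eRk (M : Matroid V) (S : Set V) : (matroidRank M S : ℕ∞) ≤ M.eRk S := by
  refine le_of_not_gt fun hlt => ?_
  lift M.eRk S to ℕ using hlt.ne_top with r hr
  obtain ⟨_, ⟨I, hIS, hI, rfl⟩, hrI⟩ := exists_lt_of_lt_csSup
    (s := {n | ∃ I : Finset V, ↑I ⊆ S ∧ M.Indep ↑I ∧ I.card = n}) ⟨0, ∅, by simp⟩
    (Nat.cast_lt.1 hlt)
  have h := hI.encard_le_eRk_of_subset hIS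
  rw [Set.encard_coe_eq_coe_finsetCard, ← hr, Nat.cast_le] at h
  exact hrI.not_ge h

lemma link_induce_indepComplex [DecidableEq V] {M : Matroid V} {v : V} {T : Finset V}
    (hv : M.IsNonloop v) (hvT : v ∈ T) :
    link (induce (indepComplex M) T) {v} = induce (indepComplex (M ／ {v})) (T.erase v) := by
  ext σ
  simp only [mem_link_singleton, induce, indepComplex, Set.mem_ofPred_eq, coe_insert,
    hv.contractElem_indep_iff, mem_coe, insert_subset_iff, hvT, subset_erase]
  tauto

lemma exists_mem_eRk_erase_eq_of_not_indep [DecidableEq V] {M : Matroid V} {T : Finset V}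
    (hT : ¬ M.Indep T) :
    ∃ v ∈ T, M.eRk (T.erase v) = M.eRk T := by
  obtain ⟨B, hB⟩ := M.exists_isBasis' T
  obtain ⟨v, hvT, hvB⟩ : ∃ v ∈ T, v ∉ B := by
    by_contra! h
    exact hT (hB.indep.subset h)
  refine ⟨v, hvT, (M.eRk_mono (coe_subset.2 (erase_subset v T))).antisymm ?_⟩
  rw [hB.eRk_eq_encard, coe_erase]
  exact hB.indep.encard_le_eRk_of_subset (Set.subset_sdiff_singleton hB.subset hvB)

lemma isAcyclicAt_induce_indepComplex [LinearOrder V] {R : Type*} [CommRing R] (M : Matroid V)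
    (T : Finset V) (k : ℕ) (hk : k < M.eRk T) : IsAcyclicAt R (induce (indepComplex M) T) k := by
  induction T using Finset.strongInduction generalizing M k with | H T ih =>
  have hX := isComplex_induce (isComplex_indepComplex M) T
  cases k with
  | zero =>
    obtain ⟨u, huT, hu⟩ := exists_mem_isNonloop_of_eRk_pos hk
    refine isAcyclicAt_of_insert_mem (v := u) fun σ _ hσ => ?_
    rw [card_eq_zero.1 hσ]
    exact ⟨by simpa [indepComplex] using hu.indep, by simpa using huT⟩
  | succ k =>
    by_cases hT : M.Indep T
    · obtain rfl | ⟨v, hv⟩ := T.eq_empty_or_nonempty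
      · simp at hk
      · exact isAcyclicAt_of_insert_mem fun σ hσ _ =>
          have hvσ := insert_subset hv hσ.2
          ⟨isComplex_indepComplex M T hT _ hvσ, hvσ⟩
    obtain ⟨v, hvT, hv⟩ := exists_mem_eRk_erase_eq_of_not_indep hT
    refine .of_link_of_deletion hX (v := v) ?_ ?_
    · by_cases hvM : M.IsNonloop v
      · rw [link_induce_indepComplex hvM hvT]
        refine ih _ (erase_ssubset hvT) _ k ?_
        have h := hk.trans_le (eRk_le_eRk_contractElem_add_one hvM hvT)
        rwa [Nat.cast_add_one, ENat.add_lt_add_iff_right ENat.one_ne_top, ← coe_erase] at h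
      · refine isAcyclicAt_of_insert_mem (v := v) fun σ hσ _ => ?_
        exact absurd (Matroid.Indep.isNonloop_of_mem (mem_link_singleton.1 hσ).2.1
          (mem_insert_self v σ)) hvM
    · rw [sep_notMem_induce]
      exact ih _ (erase_ssubset hvT) M (k + 1) (by rwa [hv])

end Matroid

section Homology

variable {F : Type} [Field F]

/-- The inclusion of the chains of a complex into the chains on all finite subsets of `V`. -/
noncomputable def chainIncl (X : Set (Finset V)) (n : ℕ) : SChain F X n →ₗ[F] (Finset V →₀ F) :=
  Finsupp.lmapDomain F F (Subtype.val : Face X n → Finset V)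

lemma chainIncl_single (X : Set (Finset V)) (n : ℕ) (σ : Face X n) (a : F) :
    chainIncl X n (Finsupp.single σ a : Face X n →₀ F) = Finsupp.single σ.1 a :=
  Finsupp.mapDomain_single

lemma chainIncl_injective (X : Set (Finset V)) (n : ℕ) :
    Function.Injective (chainIncl (F := F) X n) :=
  Finsupp.mapDomain_injective Subtype.val_injective

lemma range_chainIncl (X : Set (Finset V)) (n : ℕ) :
    LinearMap.range (chainIncl X n) = chains F X n := by
  have h := Finsupp.lmapDomain_supported F F (Subtype.val : Face X n → Finset V) Set.univ
  rw [Finsupp.supported_univ, Submodule.map_top, Set.image_univ] at h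
  exact h.trans (congrArg _ Subtype.range_val)

variable [LinearOrder V]

lemma chainIncl_bdryElem {X : Set (Finset V)} (hX : IsComplex X) (n : ℕ) (σ : Face X (n + 1)) :
    chainIncl X n (bdryElem F X n σ) = bdry (Finsupp.single σ.1 1) := by
  rw [bdryElem, map_sum, bdry_single, ← sum_attach σ.1]
  refine sum_congr rfl fun x _ => ?_
  refine (congrArg (chainIncl X n) (dif_pos (hX _ σ.2.1 _ (erase_subset _ _)))).trans ?_
  exact (map_smul _ _ _).trans (congrArg _ (chainIncl_single X n _ 1))

lemma chainIncl_sbdry {X : Set (Finset V)} (hX : IsComplex X) (n : ℕ) (c : SChain F X (n + 1)) :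
    chainIncl X n (sbdry F X n c) = bdry (chainIncl X (n + 1) c) := by
  suffices h : chainIncl X n ∘ₗ sbdry F X n = bdry ∘ₗ chainIncl X (n + 1) from
    LinearMap.congr_fun h c
  refine Finsupp.lhom_ext' fun σ => LinearMap.ext_ring ?_
  have hσ : sbdry F X n (Finsupp.single σ 1 : Face X (n + 1) →₀ F) = bdryElem F X n σ :=
    (Finsupp.lsum_single F _ σ 1).trans (one_smul F _)
  change chainIncl X n (sbdry F X n (Finsupp.single σ 1 : Face X (n + 1) →₀ F)) =
    bdry (chainIncl X (n + 1) (Finsupp.single σ 1 : Face X (n + 1) →₀ F))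
  rw [hσ, chainIncl_bdryElem hX, chainIncl_single]

lemma mem_scyc_of_bdry_chainIncl {X : Set (Finset V)} (hX : IsComplex X) {n : ℕ}
    {c : SChain F X n} (hc : bdry (chainIncl X n c) = 0) : c ∈ scyc F X n := by
  cases n with
  | zero => exact Submodule.mem_top
  | succ n =>
    refine LinearMap.mem_ker.2 (chainIncl_injective X n ?_)
    rw [chainIncl_sbdry hX, hc, map_zero]

lemma isAcyclicAt_of_subsingleton_RH {X : Set (Finset V)} (hX : IsComplex X) {n : ℕ}
    (h : Subsingleton (RH F X n)) : IsAcyclicAt F X n := by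
  rw [Submodule.Quotient.subsingleton_iff, Submodule.comap_subtype_eq_top] at h
  intro c hc hbc
  rw [← range_chainIncl] at hc
  obtain ⟨c, rfl⟩ := hc
  obtain ⟨b, rfl⟩ := h (mem_scyc_of_bdry_chainIncl (F := F) hX hbc)
  exact ⟨chainIncl X (n + 1) b, (range_chainIncl X (n + 1)).le ⟨b, rfl⟩,
    (chainIncl_sbdry hX n b).symm⟩

lemma IsLeray.isAcyclicAt_induce {d : ℕ} {X : Set (Finset V)} (hL : IsLeray F d X)
    (hX : IsComplex X) (S : Finset V) {k : ℕ} (hk : d < k) : IsAcyclicAt F (induce X S) k := by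
  obtain ⟨i, rfl⟩ := Nat.exists_eq_succ_of_ne_zero (Nat.ne_zero_of_lt hk)
  exact isAcyclicAt_of_subsingleton_RH (isComplex_induce hX S) (hL S i (Nat.le_of_lt_succ hk))

end Homology

section BoundingChain

variable [LinearOrder V] {R : Type*} [CommRing R]

open Classical in
/-- A choice of a chain of `Y` of degree `k + 1` with boundary `c`, and `0` if there is none. -/
noncomputable def boundingChain (Y : Set (Finset V)) (k : ℕ) (c : Finset V →₀ R) :
    Finset V →₀ R :=
  if h : ∃ b ∈ chains R Y (k + 1), bdry b = c then h.choose else 0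

lemma boundingChain_mem_chains (Y : Set (Finset V)) (k : ℕ) (c : Finset V →₀ R) :
    boundingChain Y k c ∈ chains R Y (k + 1) := by
  rw [boundingChain]
  split_ifs with h
  · exact h.choose_spec.1
  · exact zero_mem _

lemma IsAcyclicAt.bdry_boundingChain {Y : Set (Finset V)} {k : ℕ} (hY : IsAcyclicAt R Y k)
    {c : Finset V →₀ R} (hc : c ∈ chains R Y k) (hbc : bdry c = 0) :
    bdry (boundingChain Y k c) = c := by
  have h := hY c hc hbc
  rw [boundingChain, dif_pos h]
  exact h.choose_spec.2

end BoundingChain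

section CubeFill

variable [LinearOrder V] {R : Type*} [CommRing R]

/-- The image, under a map `ψ` sending the cube of all sets between `α` and `α ∪ γ` to the chain
`ψ α γ`, of the augmented cubical boundary of that cube: the facets in direction `v ∈ γ` are
`(α, γ \ {v})` and `(α ∪ {v}, γ \ {v})`, and a vertex has boundary `∅`. -/
noncomputable def cubeBdry (ψ : Finset V → Finset V → Finset V →₀ R) (α γ : Finset V) :
    Finset V →₀ R :=
  (if γ = ∅ then Finsupp.single ∅ 1 else 0) +
    ∑ v ∈ γ, vertexSign R v γ • (ψ α (γ.erase v) - ψ (insert v α) (γ.erase v))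

lemma bdry_cubeBdry {ψ : Finset V → Finset V → Finset V →₀ R} {α γ : Finset V}
    (h : ∀ v ∈ γ, bdry (ψ α (γ.erase v)) = cubeBdry ψ α (γ.erase v) ∧
      bdry (ψ (insert v α) (γ.erase v)) = cubeBdry ψ (insert v α) (γ.erase v)) :
    bdry (cubeBdry ψ α γ) = 0 := by
  let D (v w : V) : Finset V →₀ R :=
    ψ α ((γ.erase v).erase w) - ψ (insert w α) ((γ.erase v).erase w) -
      (ψ (insert v α) ((γ.erase v).erase w) - ψ (insert w (insert v α)) ((γ.erase v).erase w))
  have hD (v w : V) : D v w = D w v := by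
    simp only [D, erase_right_comm (a := v), insert_comm w v]
    abel
  have hfacets : ∀ v ∈ γ, bdry (ψ α (γ.erase v) - ψ (insert v α) (γ.erase v)) =
      ∑ w ∈ γ.erase v, vertexSign R w (γ.erase v) • D v w := fun v hv => by
    rw [map_sub, (h v hv).1, (h v hv).2, cubeBdry, cubeBdry, add_sub_add_left_eq_sub,
      ← sum_sub_distrib]
    simp only [← smul_sub, D]
  have hvertex : bdry (if γ = ∅ then Finsupp.single (∅ : Finset V) (1 : R) else 0) = 0 := by
    split_ifs
    exacts [bdry_single_empty, map_zero _]
  rw [cubeBdry, map_add, hvertex, zero_add, map_sum,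
    ← sum_sum_erase_vertexSign_smul_eq_zero (R := R) hD γ]
  refine sum_congr rfl fun v hv => ?_
  rw [map_smul, hfacets v hv, smul_sum]
  simp only [smul_smul]

variable [Fintype V]

variable (R) in
/-- Recursively chosen chains `ψ(α, γ)` of `Y` whose simplices avoid `α`, such that the boundary of
`ψ(α, γ)` is the image of the cubical boundary of the cube of all sets between `α` and `α ∪ γ`,
provided the complexes `Y[V \ α']` are acyclic. -/
noncomputable def cubeFill (Y : Set (Finset V)) (α γ : Finset V) : Finset V →₀ R :=
  boundingChain (induce Y αᶜ) #γ ((if γ = ∅ then Finsupp.single ∅ 1 else 0) +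
    ∑ v ∈ γ.attach, vertexSign R (v : V) γ •
      (cubeFill Y α (γ.erase v) - cubeFill Y (insert (v : V) α) (γ.erase v)))
termination_by #γ
decreasing_by all_goals exact card_erase_lt_of_mem v.2

lemma cubeFill_eq (Y : Set (Finset V)) (α γ : Finset V) :
    cubeFill R Y α γ = boundingChain (induce Y αᶜ) #γ (cubeBdry (cubeFill R Y) α γ) := by
  rw [cubeFill, cubeBdry, ← sum_attach γ]

lemma cubeFill_mem_chains (Y : Set (Finset V)) (α γ : Finset V) :
    cubeFill R Y α γ ∈ chains R (induce Y αᶜ) (#γ + 1) :=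
  cubeFill_eq (R := R) Y α γ ▸ boundingChain_mem_chains _ _ _

lemma cubeBdry_cubeFill_mem_chains {Y : Set (Finset V)} (h_empty : ∅ ∈ Y) (α γ : Finset V) :
    cubeBdry (cubeFill R Y) α γ ∈ chains R (induce Y αᶜ) #γ := by
  refine add_mem ?_ (sum_mem fun v hv => Submodule.smul_mem _ _ (sub_mem ?_ ?_))
  · split_ifs with hγ
    · exact Finsupp.single_mem_supported R (1 : R) (by simp [induce, h_empty, hγ])
    · exact zero_mem _
  · rw [← card_erase_add_one hv]
    exact cubeFill_mem_chains Y α (γ.erase v)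
  · rw [← card_erase_add_one hv]
    have hle : induce Y (insert v α)ᶜ ⊆ induce Y αᶜ := fun σ hσ =>
      ⟨hσ.1, hσ.2.trans (compl_subset_compl.2 (subset_insert v α))⟩
    exact chains_le_chains (fun σ hσ _ => hle hσ) (cubeFill_mem_chains Y (insert v α) (γ.erase v))

variable {X Y : Set (Finset V)}

lemma bdry_cubeFill (hX : IsComplex X) (h_empty : ∅ ∈ Y)
    (hY : ∀ α ∈ X, ∀ k, IsAcyclicAt R (induce Y αᶜ) k) {α γ : Finset V} (hαγ : α ∪ γ ∈ X) :
    bdry (cubeFill R Y α γ) = cubeBdry (cubeFill R Y) α γ := by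
  induction γ using Finset.strongInduction generalizing α with | H γ ih =>
  rw [cubeFill_eq]
  refine (hY α (hX _ hαγ _ subset_union_left) _).bdry_boundingChain
    (cubeBdry_cubeFill_mem_chains h_empty α γ) (bdry_cubeBdry fun v hv => ⟨?_, ?_⟩)
  · exact ih _ (erase_ssubset hv) (hX _ hαγ _ (union_subset_union_right (erase_subset v γ)))
  · refine ih _ (erase_ssubset hv) ?_
    rwa [insert_union, ← union_insert, insert_erase hv]

end CubeFill

section Trace

lemma trace_eq_sum_apply_single {R ι : Type*} [CommSemiring R] [Fintype ι]
    (f : (ι →₀ R) →ₗ[R] (ι →₀ R)) :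
    LinearMap.trace R _ f = ∑ i, f (Finsupp.single i 1) i := by
  classical
  simp [LinearMap.trace_eq_matrix_trace R Finsupp.basisSingleOne, Matrix.trace,
    LinearMap.toMatrix_apply]

variable [Fintype V] [LinearOrder V] {R : Type*} [CommRing R] {X Y : Set (Finset V)}

variable (R) in
/-- The operator `h` of the trace argument: it sends a simplex `β` to the filling `ψ(∅, β)` of the
cube of all its faces. -/
noncomputable def cubeHomotopy (Y : Set (Finset V)) :
    (Finset V →₀ R) →ₗ[R] (Finset V →₀ R) :=
  Finsupp.linearCombination R (cubeFill R Y ∅)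

lemma cubeHomotopy_single (β : Finset V) :
    cubeHomotopy R Y (Finsupp.single β 1) = cubeFill R Y ∅ β := by
  simp [cubeHomotopy]

lemma cubeHomotopy_mem_supported (c : Finset V →₀ R) :
    cubeHomotopy R Y c ∈ Finsupp.supported R R Y :=
  linearCombination_mem_of_mem_supported (s := Set.univ)
    (fun β _ => Finsupp.supported_mono (fun σ hσ => hσ.1.1) (cubeFill_mem_chains Y ∅ β))
    (by simp)

lemma bdry_cubeHomotopy_sub_apply_self (hX : IsComplex X) (hYX : Y ⊆ X) (h_empty : ∅ ∈ Y)
    (hY : ∀ α ∈ X, ∀ k, IsAcyclicAt R (induce Y αᶜ) k) (β : Finset V) :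
    bdry (cubeHomotopy R Y (Finsupp.single β 1)) β -
      cubeHomotopy R Y (bdry (Finsupp.single β 1)) β = if β = ∅ then 1 else 0 := by
  by_cases hβ : β ∈ X
  · have hvanish : ∀ v ∈ β, cubeFill R Y {v} (β.erase v) β = 0 := fun v hv => by
      by_contra h
      have hβv := (cubeFill_mem_chains (R := R) Y {v} (β.erase v) (Finsupp.mem_support_iff.2 h)).1.2
      exact mem_compl.1 (hβv hv) (mem_singleton_self v)
    rw [cubeHomotopy_single, bdry_cubeFill hX h_empty hY (by rwa [empty_union]), cubeBdry,
      bdry_single, map_sum]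
    simp only [map_smul, cubeHomotopy_single, smul_sub, sum_sub_distrib, insert_empty_eq]
    rw [← add_sub_assoc, add_sub_right_comm, Finsupp.add_apply, add_sub_cancel_right,
      Finsupp.sub_apply, Finsupp.finsetSum_apply]
    have hsum : ∑ v ∈ β, (vertexSign R v β • cubeFill R Y {v} (β.erase v)) β = 0 :=
      sum_eq_zero fun v hv => by rw [Finsupp.smul_apply, hvanish v hv, smul_zero]
    rw [hsum, sub_zero]
    split_ifs with h <;> simp [h]
  · have hbdry : bdry (cubeHomotopy R Y (Finsupp.single β 1)) ∈ Finsupp.supported R R X :=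
      bdry_mem_supported (fun σ hσ x _ => hX σ (hYX hσ) _ (erase_subset x σ))
        (cubeHomotopy_mem_supported _)
    have hβ_empty : β ≠ ∅ := by
      rintro rfl
      exact hβ (hYX h_empty)
    rw [Finsupp.notMem_support_iff.1 fun h => hβ (hbdry h),
      Finsupp.notMem_support_iff.1 fun h => hβ (hYX (cubeHomotopy_mem_supported _ h)), sub_zero,
      if_neg hβ_empty]

lemma exists_not_isAcyclicAt_induce_compl [Nontrivial R] (hX : IsComplex X) (hYX : Y ⊆ X)
    (h_empty : ∅ ∈ Y) :
    ∃ α ∈ X, ∃ k, ¬ IsAcyclicAt R (induce Y αᶜ) k := by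
  by_contra! hY
  have htrace : LinearMap.trace R _ (bdry ∘ₗ cubeHomotopy R Y) -
      LinearMap.trace R _ (cubeHomotopy R Y ∘ₗ bdry) = 1 := by
    simp only [trace_eq_sum_apply_single, ← sum_sub_distrib, LinearMap.comp_apply,
      bdry_cubeHomotopy_sub_apply_self hX hYX h_empty hY, sum_ite_eq', mem_univ, if_true]
  rw [LinearMap.trace_comp_comm', sub_self] at htrace
  exact zero_ne_one htrace

end Trace

/-- **The Topological Colorful Helly Theorem, matroidal version** (Kalai–Meshulam).
Let `M` be a matroid and `X` a `d`-Leray complex over a field `F`, both on the same finite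
vertex set `V`.  If `M ⊆ X` then there is a simplex `σ ∈ X` with `ρ_M(V \ σ) ≤ d`. -/
theorem topological_colorful_helly_matroid
    {V : Type} [Fintype V] [LinearOrder V] (F : Type) [Field F]
    (d : ℕ) (X : Set (Finset V)) (hX : IsComplex X)
    (hLeray : IsLeray F d X)
    (M : Matroid V) (hME : M.E = Set.univ)
    (hMX : indepComplex M ⊆ X) :
    ∃ σ ∈ X, matroidRank M ((↑σ : Set V)ᶜ) ≤ d := by
  let Y : Set (Finset V) := {σ ∈ X | #σ ≤ d + 1 → M.Indep ↑σ}
  have hY_empty : ∅ ∈ Y := ⟨hMX (by simp [indepComplex]), by simp⟩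
  obtain ⟨σ, hσ, k, hk⟩ :=
    exists_not_isAcyclicAt_induce_compl (R := F) hX (fun τ (hτ : τ ∈ Y) => hτ.1) hY_empty
  refine ⟨σ, hσ, le_of_not_gt fun hlt => hk ?_⟩
  obtain hkd | hdk := le_or_gt k d
  · have hrank : k < M.eRk ↑σᶜ := by
      rw [coe_compl]
      exact (Nat.cast_lt.2 (hkd.trans_lt hlt)).trans_le (coe_matroidRank_le_eRk M _)
    exact (isAcyclicAt_induce_indepComplex M σᶜ k hrank).of_skeleton
      (fun τ hτ hτk => ⟨hτ.1.2 (by omega), hτ.2⟩)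
      (fun τ hτ _ => ⟨⟨hMX hτ.1, fun _ => hτ.1⟩, hτ.2⟩)
  · exact (hLeray.isAcyclicAt_induce hX σᶜ hdk).of_skeleton
      (fun τ hτ _ => ⟨hτ.1.1, hτ.2⟩)
      (fun τ hτ hτk => ⟨⟨hτ.1, fun h => by omega⟩, hτ.2⟩)
end
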